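/- arXiv:2408.11177 — 3 statements merged into one kernel-verified Lean document; each statement's English description precedes it below -/
import Mathlib

section
/- Assume J̄ < ∞, ν > 0 and I_ν < 0. Let {q^{(k)}} ⊆ ℓ²(Z^d) be any minimizing sequence, i.e. M[q^{(k)}] = ν for all k and H[q^{(k)}] → I_ν. Then there exist a subsequence {q^{(n_k)}}, lattice shifts m_k ∈ Z^d, phases φ_k ∈ ℝ, and q* ∈ ℓ²(Z^d) with nonnegative entries such that e^{iφ_k} q^{(n_k)}(· − m_k) → q* in ℓ²(Z^d); in particular M[q*] = ν and H[q*] = I_ν. Moreover there exists ω > 0 such that −ω (q*)_n = (Lq*)_n − ((q*)_n)^p for all n ∈ Z^d. -/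
open scoped BigOperators
open Filter Topology

noncomputable section

/-- The `ℓ^∞` norm of a lattice point of `ℤ^d`, as a natural number. -/
def latNorm {d : ℕ} (m : Fin d → ℤ) : ℕ := Finset.univ.sup fun i => (m i).natAbs

/-- The summand `J_{|m|}` for `m ≠ 0` (and `0` for `m = 0`). -/
def JbarSummand (d : ℕ) (J : ℕ → ℝ) (m : Fin d → ℤ) : ℝ :=
  if m = 0 then 0 else J (latNorm m)

/-- `J̄ = Σ_{m ≠ 0} J_{|m|}`. -/
def Jbar (d : ℕ) (J : ℕ → ℝ) : ℝ := ∑' m : Fin d → ℤ, JbarSummand d J m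

/-- The quadratic form `⟨Lu,u⟩ = (1/2) Σ_n Σ_{m ≠ n} J_{|n-m|} |u_n - u_m|²`. -/
def pairing (d : ℕ) (J : ℕ → ℝ) (u : (Fin d → ℤ) → ℂ) : ℝ :=
  (1/2) * ∑' n : Fin d → ℤ, ∑' m : Fin d → ℤ,
    if m = n then 0 else J (latNorm (n - m)) * ‖u n - u m‖ ^ 2

/-- The mass `M[u] = Σ_n |u_n|²`. -/
def mass (d : ℕ) (u : (Fin d → ℤ) → ℂ) : ℝ := ∑' n : Fin d → ℤ, ‖u n‖ ^ 2

/-- Membership in `ℓ²(ℤ^d)`. -/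
def MemL2 (d : ℕ) (u : (Fin d → ℤ) → ℂ) : Prop := Summable fun n : Fin d → ℤ => ‖u n‖ ^ 2

/-- The potential term `Σ_n |u_n|^{p+1}`. -/
def ppot (d : ℕ) (p : ℝ) (u : (Fin d → ℤ) → ℂ) : ℝ := ∑' n : Fin d → ℤ, ‖u n‖ ^ (p + 1)

/-- The energy `H[u] = (1/2)⟨Lu,u⟩ - (1/(p+1)) Σ_n |u_n|^{p+1}`. -/
def energy (d : ℕ) (J : ℕ → ℝ) (p : ℝ) (u : (Fin d → ℤ) → ℂ) : ℝ :=
  (1/2) * pairing d J u - (1/(p+1)) * ppot d p u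

/-- `I_ν = inf {H[q] : q ∈ ℓ², M[q] = ν}`. -/
def Ifun (d : ℕ) (J : ℕ → ℝ) (p : ℝ) (ν : ℝ) : ℝ :=
  sInf {x : ℝ | ∃ q, MemL2 d q ∧ mass d q = ν ∧ energy d J p q = x}

/-- The operator `L` applied to a real-valued sequence:
`(Lq)_n = Σ_{m ≠ n} J_{|n-m|} (q_n - q_m)`. -/
def LopR (d : ℕ) (J : ℕ → ℝ) (q : (Fin d → ℤ) → ℝ) (n : Fin d → ℤ) : ℝ :=
  ∑' m : Fin d → ℤ, if m = n then 0 else J (latNorm (n - m)) * (q n - q m)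

/-!
Scaling the mass down to `M < ν` gives `M I_ν < ν H[f]` for every nonzero `f` of mass `M`, because
`p > 1`. By the Brezis–Lieb splitting, the energy of a minimizing sequence that converges pointwise
is asymptotically the energy of its limit plus that of the remainder, so the scaling inequality
forces a nonzero pointwise limit to carry the whole mass. Since `I_ν < 0`, a minimizing sequence
stays bounded away from `0` at some site; translating that site to a fixed one makes the limit
nonzero.

A ground state `u` satisfies the Euler–Lagrange equation by varying a single site and rescaling
back to mass `ν`. Replacing `u` by its modulus does not raise the energy, so the modulus is again a
ground state and `u x`, `u y` lie on one ray whenever `K x y > 0`. By the Euler–Lagrange equation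
the zeros of the modulus propagate along such edges, and by the scaling inequality no ground state
splits into two decoupled pieces. So the phase of `u` is constant.
-/

namespace DiscreteNLS

section PowSum

variable {ι E : Type*} [NormedAddCommGroup E]

/-- The power sum `∑ ‖f i‖ ^ s`: the mass for `s = 2`, the potential term for `s = p + 1`. It is
`0` by convention where the series diverges. -/
def powSum (s : ℝ) (f : ι → E) : ℝ := ∑' i, ‖f i‖ ^ s

lemma powSum_nonneg (s : ℝ) (f : ι → E) : 0 ≤ powSum s f := tsum_nonneg fun _ => by positivity

lemma powSum_congr_norm {F : Type*} [NormedAddCommGroup F] (s : ℝ) {f : ι → E} {g : ι → F}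
    (h : ∀ i, ‖f i‖ = ‖g i‖) : powSum s f = powSum s g :=
  tsum_congr fun i => by rw [h]

lemma powSum_smul [NormedSpace ℝ E] (s c : ℝ) (f : ι → E) :
    powSum s (c • f) = |c| ^ s * powSum s f := by
  simp only [powSum, Pi.smul_apply, norm_smul, Real.norm_eq_abs, ← tsum_mul_left,
    Real.mul_rpow (abs_nonneg c) (norm_nonneg _)]

lemma powSum_comp_equiv {κ : Type*} (s : ℝ) (f : ι → E) (σ : κ ≃ ι) :
    powSum s (f ∘ σ) = powSum s f :=
  σ.tsum_eq fun i => ‖f i‖ ^ s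

lemma memℓp_two_iff_summable_norm_sq {f : ι → E} : Memℓp f 2 ↔ Summable fun i => ‖f i‖ ^ 2 := by
  simp [memℓp_gen_iff (p := 2) (by simp)]

lemma memℓp_two_congr_norm {F : Type*} [NormedAddCommGroup F] {f : ι → E} {g : ι → F}
    (h : ∀ i, ‖f i‖ = ‖g i‖) : Memℓp f 2 ↔ Memℓp g 2 := by
  simp only [memℓp_two_iff_summable_norm_sq, h]

lemma memℓp_two_comp_equiv {κ : Type*} {f : ι → E} (hf : Memℓp f 2) (σ : κ ≃ ι) :
    Memℓp (f ∘ σ) 2 :=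
  memℓp_two_iff_summable_norm_sq.2 (σ.summable_iff.2 (memℓp_two_iff_summable_norm_sq.1 hf))

lemma memℓp_two_indicator {f : ι → E} (hf : Memℓp f 2) (A : Set ι) : Memℓp (A.indicator f) 2 :=
  memℓp_two_iff_summable_norm_sq.2 <|
    (memℓp_two_iff_summable_norm_sq.1 hf).of_nonneg_of_le (fun _ => by positivity) fun i =>
      pow_le_pow_left₀ (norm_nonneg _) (norm_indicator_le_norm_self f i) 2

lemma memℓp_two_single [DecidableEq ι] (i : ι) (a : E) : Memℓp (Pi.single i a : ι → E) 2 :=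
  memℓp_two_iff_summable_norm_sq.2 <|
    summable_of_ne_finset_zero (s := {i}) fun j hj => by simp_all

lemma summable_norm_rpow {s : ℝ} (hs : 2 ≤ s) {f : ι → E} (hf : Memℓp f 2) :
    Summable fun i => ‖f i‖ ^ s := by
  have hs' : (ENNReal.ofReal s).toReal = s := ENNReal.toReal_ofReal (by linarith)
  have hle : 2 ≤ ENNReal.ofReal s := by simpa using ENNReal.ofReal_le_ofReal hs
  simpa only [hs'] using (memℓp_gen_iff (by rw [hs']; linarith)).1 (hf.of_exponent_ge hle)

lemma powSum_pos {s : ℝ} (hs : 2 ≤ s) {f : ι → E} (hf : Memℓp f 2) (hne : f ≠ 0) :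
    0 < powSum s f := by
  obtain ⟨i, hi⟩ := Function.ne_iff.1 hne
  exact (summable_norm_rpow hs hf).tsum_pos (fun _ => by positivity) i
    (Real.rpow_pos_of_pos (norm_pos_iff.2 hi) s)

lemma norm_le_sqrt_of_powSum_two_le {f : ι → E} (hf : Memℓp f 2) {C : ℝ} (hC : powSum 2 f ≤ C)
    (i : ι) : ‖f i‖ ≤ √C := by
  have hi : ‖f i‖ ^ (2 : ℝ) ≤ powSum 2 f :=
    (summable_norm_rpow le_rfl hf).le_tsum i fun _ _ => by positivity
  rw [Real.rpow_two] at hi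
  exact Real.le_sqrt_of_sq_le (hi.trans hC)

lemma rpow_le_rpow_sub_two_mul_sq {s x R : ℝ} (hs : 2 ≤ s) (hx : 0 ≤ x) (hxR : x ≤ R) :
    x ^ s ≤ R ^ (s - 2) * x ^ 2 := by
  have hsplit : x ^ s = x ^ (s - 2) * x ^ 2 := by
    rw [← Real.rpow_two, ← Real.rpow_add' hx (by linarith), sub_add_cancel]
  rw [hsplit]
  gcongr

lemma powSum_le_of_norm_le {s R : ℝ} (hs : 2 ≤ s) {f : ι → E} (hf : Memℓp f 2)
    (hR : ∀ i, ‖f i‖ ≤ R) : powSum s f ≤ R ^ (s - 2) * powSum 2 f := by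
  simp only [powSum, ← tsum_mul_left]
  refine (summable_norm_rpow hs hf).tsum_le_tsum (fun i => ?_)
    ((summable_norm_rpow le_rfl hf).mul_left _)
  simpa only [Real.rpow_two] using rpow_le_rpow_sub_two_mul_sq hs (norm_nonneg _) (hR i)

lemma norm_sub_sq_le (a b : E) : ‖a - b‖ ^ 2 ≤ 2 * ‖a‖ ^ 2 + 2 * ‖b‖ ^ 2 := by
  have h := pow_le_pow_left₀ (norm_nonneg _) (norm_sub_le a b) 2
  linarith [sq_nonneg (‖a‖ - ‖b‖)]

lemma powSum_two_sub_le {f g : ι → E} (hf : Memℓp f 2) (hg : Memℓp g 2) :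
    powSum 2 (f - g) ≤ 2 * powSum 2 f + 2 * powSum 2 g := by
  have hf' := (summable_norm_rpow le_rfl hf).mul_left 2
  have hg' := (summable_norm_rpow le_rfl hg).mul_left 2
  simp only [powSum, ← tsum_mul_left, ← hf'.tsum_add hg']
  refine (summable_norm_rpow le_rfl (hf.sub hg)).tsum_le_tsum (fun i => ?_) (hf'.add hg')
  simpa only [Real.rpow_two, Pi.sub_apply] using norm_sub_sq_le (f i) (g i)

lemma powSum_indicator_add_powSum_indicator_compl {s : ℝ} (hs : 2 ≤ s) {f : ι → E}
    (hf : Memℓp f 2) (A : Set ι) :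
    powSum s (A.indicator f) + powSum s (Aᶜ.indicator f) = powSum s f := by
  classical
  have hs0 : s ≠ 0 := by linarith
  rw [powSum, powSum, ← (summable_norm_rpow hs (memℓp_two_indicator hf A)).tsum_add
    (summable_norm_rpow hs (memℓp_two_indicator hf Aᶜ))]
  refine tsum_congr fun i => ?_
  by_cases hi : i ∈ A <;> simp [hi, Real.zero_rpow hs0]

lemma powSum_update [DecidableEq ι] {s : ℝ} (hs : 2 ≤ s) {f : ι → E} (hf : Memℓp f 2) (i : ι)
    (a : E) : powSum s (Function.update f i a) = ‖a‖ ^ s - ‖f i‖ ^ s + powSum s f :=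
  (tsum_congr fun j => Function.apply_update (fun _ y => ‖y‖ ^ s) f i a j).trans
    ((summable_norm_rpow hs hf).hasSum.update i (‖a‖ ^ s)).tsum_eq

lemma memℓp_two_and_powSum_two_le_of_tendsto {α : Type*} {l : Filter α} [l.NeBot]
    {v : α → ι → E} {f : ι → E} {C : ℝ} (hv : ∀ k, Memℓp (v k) 2) (hC : ∀ k, powSum 2 (v k) ≤ C)
    (hlim : ∀ i, Tendsto (fun k => v k i) l (𝓝 (f i))) : Memℓp f 2 ∧ powSum 2 f ≤ C := by
  have hfin : ∀ t : Finset ι, ∑ i ∈ t, ‖f i‖ ^ 2 ≤ C := by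
    intro t
    have ht : Tendsto (fun k => ∑ i ∈ t, ‖v k i‖ ^ 2) l (𝓝 (∑ i ∈ t, ‖f i‖ ^ 2)) :=
      tendsto_finsetSum _ fun i _ => (hlim i).norm.pow 2
    refine le_of_tendsto' ht fun k => le_trans ?_ (hC k)
    simp only [powSum, Real.rpow_two]
    exact (memℓp_two_iff_summable_norm_sq.1 (hv k)).sum_le_tsum t fun _ _ => by positivity
  have hf : Summable fun i => ‖f i‖ ^ 2 := summable_of_sum_le (fun _ => by positivity) hfin
  refine ⟨memℓp_two_iff_summable_norm_sq.2 hf, ?_⟩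
  simpa only [powSum, Real.rpow_two] using hf.tsum_le_of_sum_le hfin

end PowSum

section BrezisLieb

variable {ι α E : Type*} [NormedAddCommGroup E] {l : Filter α}

lemma summable_norm_mul_norm {f g : ι → E} (hf : Memℓp f 2) (hg : Memℓp g 2) :
    Summable fun i => ‖f i‖ * ‖g i‖ := by
  refine Summable.of_nonneg_of_le (fun _ => by positivity) (fun i => ?_)
    ((memℓp_two_iff_summable_norm_sq.1 hf).add (memℓp_two_iff_summable_norm_sq.1 hg))
  nlinarith [sq_nonneg (‖f i‖ - ‖g i‖), sq_nonneg ‖f i‖, sq_nonneg ‖g i‖]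

lemma mul_le_mul_min_div_add {a b η : ℝ} (hb : 0 ≤ b) (hη : 0 < η) :
    a * b ≤ a * min b (a / η) + η * b ^ 2 := by
  rcases le_total b (a / η) with h | h
  · rw [min_eq_left h]
    linarith [mul_nonneg hη.le (sq_nonneg b)]
  · rw [min_eq_right h]
    have hab : a ≤ η * b := by rwa [div_le_iff₀' hη] at h
    have hsq : 0 ≤ a * (a / η) := by
      rw [← mul_div_assoc]
      exact div_nonneg (mul_self_nonneg a) hη.le
    nlinarith [mul_le_mul_of_nonneg_right hab hb]

-- `‖f‖ ‖r‖` is dominated by `‖f‖² / η` except where `‖f‖ ≤ η ‖r‖`, and there it costs only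
-- `η ‖r‖²`.
lemma tendsto_tsum_norm_mul_norm_zero {f : ι → E} {r : α → ι → E} {C : ℝ} (hf : Memℓp f 2)
    (hr : ∀ k, Memℓp (r k) 2) (hC : ∀ k, powSum 2 (r k) ≤ C)
    (h0 : ∀ i, Tendsto (fun k => r k i) l (𝓝 0)) :
    Tendsto (fun k => ∑' i, ‖f i‖ * ‖r k i‖) l (𝓝 0) := by
  refine tendsto_order.2 ⟨fun a ha => Eventually.of_forall fun k =>
    ha.trans_le (tsum_nonneg fun _ => by positivity), fun ε hε => ?_⟩
  obtain ⟨η, hη, hηC⟩ : ∃ η > 0, η * C < ε / 2 := by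
    refine ⟨ε / (2 * (|C| + 1)), by positivity, ?_⟩
    rw [div_mul_eq_mul_div, div_lt_div_iff₀ (by positivity) two_pos]
    nlinarith [le_abs_self C]
  set a : α → ι → ℝ := fun k i => ‖f i‖ * min ‖r k i‖ (‖f i‖ / η) with ha
  have hbound : Summable fun i => ‖f i‖ ^ 2 / η := (memℓp_two_iff_summable_norm_sq.1 hf).div_const η
  have ha_le : ∀ k i, ‖a k i‖ ≤ ‖f i‖ ^ 2 / η := fun k i => by
    rw [Real.norm_of_nonneg (by positivity), sq, mul_div_assoc]
    exact mul_le_mul_of_nonneg_left (min_le_right _ _) (norm_nonneg _)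
  have ha_lim : Tendsto (fun k => ∑' i, a k i) l (𝓝 0) := by
    have hpt : ∀ i, Tendsto (fun k => a k i) l (𝓝 0) := fun i => by
      have hmin := (tendsto_norm_zero.comp (h0 i)).min (tendsto_const_nhds (x := ‖f i‖ / η))
      rw [min_eq_left (by positivity)] at hmin
      simpa only [mul_zero, Function.comp_def, ha] using hmin.const_mul ‖f i‖
    simpa only [tsum_zero] using
      tendsto_tsum_of_dominated_convergence hbound hpt (Eventually.of_forall ha_le)
  filter_upwards [ha_lim.eventually_lt_const (half_pos hε)] with k hk
  have ha_sum : Summable (a k) := Summable.of_norm_bounded hbound (ha_le k)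
  have hr_sum := (memℓp_two_iff_summable_norm_sq.1 (hr k)).mul_left η
  have hCk : ∑' i, ‖r k i‖ ^ 2 ≤ C := by simpa only [powSum, Real.rpow_two] using hC k
  calc ∑' i, ‖f i‖ * ‖r k i‖
      ≤ ∑' i, (a k i + η * ‖r k i‖ ^ 2) :=
        (summable_norm_mul_norm hf (hr k)).tsum_le_tsum
          (fun i => mul_le_mul_min_div_add (norm_nonneg _) hη) (ha_sum.add hr_sum)
    _ = ∑' i, a k i + η * ∑' i, ‖r k i‖ ^ 2 := by rw [ha_sum.tsum_add hr_sum, tsum_mul_left]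
    _ < ε := by linarith [mul_le_mul_of_nonneg_left hCk hη.le]

lemma abs_rpow_sub_rpow_le {s x z M : ℝ} (hs : 1 ≤ s) (hx : x ∈ Set.Icc 0 M)
    (hz : z ∈ Set.Icc 0 M) : |z ^ s - x ^ s| ≤ s * M ^ (s - 1) * |z - x| := by
  refine (convex_Icc 0 M).norm_image_sub_le_of_norm_deriv_le
    (fun y _ => (Real.hasDerivAt_rpow_const (Or.inr hs)).differentiableAt) (fun y hy => ?_) hx hz
  rw [Real.deriv_rpow_const, Real.norm_of_nonneg]
  · have hy0 : 0 ≤ y := hy.1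
    gcongr
    exact hy.2
  · have hy0 : 0 ≤ y := hy.1
    positivity

lemma abs_norm_add_rpow_sub_le {s R : ℝ} (hs : 2 ≤ s) {a b : E} (ha : ‖a‖ ≤ R) (hb : ‖b‖ ≤ R) :
    |‖a + b‖ ^ s - ‖a‖ ^ s - ‖b‖ ^ s| ≤
      (2 * s * (2 * R) ^ (s - 2) + R ^ (s - 2)) * (‖a‖ * ‖b‖) := by
  wlog hba : ‖b‖ ≤ ‖a‖ generalizing a b
  · rw [add_comm a b, sub_right_comm, mul_comm ‖a‖]
    exact this hb ha (le_of_not_ge hba)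
  have hR : 0 ≤ R := (norm_nonneg a).trans ha
  have hnear : |‖a + b‖ - ‖a‖| ≤ ‖b‖ := by
    simpa using abs_norm_sub_norm_le (a + b) a
  have hfar : ‖a + b‖ ≤ 2 * ‖a‖ := by linarith [norm_add_le a b]
  have hpow : (2 * ‖a‖) ^ (s - 1) ≤ (2 * R) ^ (s - 2) * (2 * ‖a‖) := by
    rw [show s - 1 = s - 2 + 1 by ring, Real.rpow_add_one' (by positivity) (by linarith)]
    gcongr
  have hlarge : |‖a + b‖ ^ s - ‖a‖ ^ s| ≤ 2 * s * (2 * R) ^ (s - 2) * (‖a‖ * ‖b‖) := by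
    calc |‖a + b‖ ^ s - ‖a‖ ^ s| ≤ s * (2 * ‖a‖) ^ (s - 1) * |‖a + b‖ - ‖a‖| :=
          abs_rpow_sub_rpow_le (by linarith) ⟨norm_nonneg _, by linarith [norm_nonneg a]⟩
            ⟨norm_nonneg _, hfar⟩
      _ ≤ s * ((2 * R) ^ (s - 2) * (2 * ‖a‖)) * ‖b‖ := by gcongr
      _ = 2 * s * (2 * R) ^ (s - 2) * (‖a‖ * ‖b‖) := by ring
  have hsmall : ‖b‖ ^ s ≤ R ^ (s - 2) * (‖a‖ * ‖b‖) := by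
    refine (rpow_le_rpow_sub_two_mul_sq hs (norm_nonneg b) hb).trans ?_
    rw [sq]
    gcongr
  calc |‖a + b‖ ^ s - ‖a‖ ^ s - ‖b‖ ^ s| ≤ |‖a + b‖ ^ s - ‖a‖ ^ s| + |‖b‖ ^ s| := abs_sub _ _
    _ ≤ _ := by
      rw [abs_of_nonneg (by positivity : 0 ≤ ‖b‖ ^ s), add_mul]
      exact add_le_add hlarge hsmall

theorem tendsto_powSum_sub_powSum_sub {s C : ℝ} (hs : 2 ≤ s) {v : α → ι → E} {f : ι → E}
    (hv : ∀ k, Memℓp (v k) 2) (hf : Memℓp f 2) (hC : ∀ k, powSum 2 (v k) ≤ C)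
    (hlim : ∀ i, Tendsto (fun k => v k i) l (𝓝 (f i))) :
    Tendsto (fun k => powSum s (v k) - powSum s (v k - f)) l (𝓝 (powSum s f)) := by
  have hr : ∀ k, Memℓp (v k - f) 2 := fun k => (hv k).sub hf
  have hrC : ∀ k, powSum 2 (v k - f) ≤ 2 * C + 2 * powSum 2 f := fun k =>
    (powSum_two_sub_le (hv k) hf).trans (by linarith [hC k])
  have hr0 : ∀ i, Tendsto (fun k => (v k - f) i) l (𝓝 0) := fun i => by
    simpa using (hlim i).sub_const (f i)
  set R := max √(powSum 2 f) √(2 * C + 2 * powSum 2 f)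
  have hfR : ∀ i, ‖f i‖ ≤ R := fun i =>
    (norm_le_sqrt_of_powSum_two_le hf le_rfl i).trans (le_max_left _ _)
  have hrR : ∀ k i, ‖(v k - f) i‖ ≤ R := fun k i =>
    (norm_le_sqrt_of_powSum_two_le (hr k) (hrC k) i).trans (le_max_right _ _)
  have hzero := (tendsto_tsum_norm_mul_norm_zero hf hr hrC hr0).const_mul
    (2 * s * (2 * R) ^ (s - 2) + R ^ (s - 2))
  rw [mul_zero] at hzero
  refine tendsto_iff_norm_sub_tendsto_zero.2 (squeeze_zero (fun _ => norm_nonneg _) (fun k => ?_)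
    hzero)
  have hvs := summable_norm_rpow hs (hv k)
  have hrs := summable_norm_rpow hs (hr k)
  have hfs := summable_norm_rpow hs hf
  simp only [powSum]
  rw [← hvs.tsum_sub hrs, ← (hvs.sub hrs).tsum_sub hfs, ← tsum_mul_left]
  refine tsum_of_norm_bounded ((summable_norm_mul_norm hf (hr k)).mul_left _).hasSum fun i => ?_
  have hi := abs_norm_add_rpow_sub_le hs (hfR i) (hrR k i)
  rwa [Pi.sub_apply, add_sub_cancel, sub_right_comm] at hi

end BrezisLieb

section Dirichlet

variable {V E : Type*} [NormedAddCommGroup E]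

/-- Symmetric nonnegative edge weights `K x y` whose row sums are bounded uniformly in `x`. -/
structure IsBoundedKernel (K : V → V → ℝ) : Prop where
  nonneg : ∀ x y, 0 ≤ K x y
  symm : ∀ x y, K x y = K y x
  summable : ∀ x, Summable (K x)
  exists_tsum_le : ∃ D, ∀ x, ∑' y, K x y ≤ D

section Real

variable [NormedSpace ℝ E]

/-- The weighted gradient of a field, indexed by ordered pairs of vertices. The square root makes
the Dirichlet form an `ℓ²` norm. -/
def grad (K : V → V → ℝ) : (V → E) →ₗ[ℝ] (V × V → E) where
  toFun u z := √(K z.1 z.2) • (u z.1 - u z.2)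
  map_add' u v := by
    ext z
    simp only [Pi.add_apply, add_sub_add_comm, smul_add]
  map_smul' c u := by
    ext z
    simp only [Pi.smul_apply, RingHom.id_apply, ← smul_sub, smul_comm c]

/-- The Dirichlet form `⟨Lu, u⟩`: half the sum of `K x y ‖u x - u y‖²` over ordered pairs. -/
def dirichlet (K : V → V → ℝ) (u : V → E) : ℝ := (1 / 2) * powSum 2 (grad K u)

/-- The graph Laplacian `L`. -/
def laplacian (K : V → V → ℝ) (u : V → E) (x : V) : E := ∑' y, K x y • (u x - u y)

variable {K : V → V → ℝ}

lemma grad_apply (u : V → E) (z : V × V) : grad K u z = √(K z.1 z.2) • (u z.1 - u z.2) := rfl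

lemma IsBoundedKernel.norm_grad_sq (hK : IsBoundedKernel K) (u : V → E) (z : V × V) :
    ‖grad K u z‖ ^ 2 = K z.1 z.2 * ‖u z.1 - u z.2‖ ^ 2 := by
  rw [grad_apply, norm_smul, mul_pow, Real.norm_of_nonneg (Real.sqrt_nonneg _),
    Real.sq_sqrt (hK.nonneg _ _)]

lemma dirichlet_nonneg (K : V → V → ℝ) (u : V → E) : 0 ≤ dirichlet K u :=
  mul_nonneg (by norm_num) (powSum_nonneg _ _)

lemma dirichlet_smul (c : ℝ) (u : V → E) : dirichlet K (c • u) = c ^ 2 * dirichlet K u := by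
  simp only [dirichlet, map_smul, powSum_smul, Real.rpow_two, sq_abs]
  ring

lemma dirichlet_comp_equiv {σ : V ≃ V} (hσ : ∀ x y, K (σ x) (σ y) = K x y) (u : V → E) :
    dirichlet K (u ∘ σ) = dirichlet K u := by
  have hgrad : grad K (u ∘ σ) = grad K u ∘ σ.prodCongr σ := by
    ext z
    simp only [grad_apply, Function.comp_apply, Equiv.prodCongr_apply, Prod.map_fst, Prod.map_snd,
      hσ]
  rw [dirichlet, hgrad, powSum_comp_equiv, dirichlet]

lemma IsBoundedKernel.exists_tsum_fst_le (hK : IsBoundedKernel K) :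
    ∃ D, ∀ f : V → ℝ, (∀ x, 0 ≤ f x) → Summable f →
      (Summable fun z : V × V => K z.1 z.2 * f z.1) ∧
        ∑' z : V × V, K z.1 z.2 * f z.1 ≤ D * ∑' x, f x := by
  obtain ⟨D, hD⟩ := hK.exists_tsum_le
  refine ⟨D, fun f hf0 hf => ?_⟩
  have hle : ∀ x, ∑' y, K x y * f x ≤ D * f x := fun x => by
    rw [tsum_mul_right]
    exact mul_le_mul_of_nonneg_right (hD x) (hf0 x)
  have hrow : Summable fun x => ∑' y, K x y * f x :=
    (hf.mul_left D).of_nonneg_of_le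
      (fun x => tsum_nonneg fun y => mul_nonneg (hK.nonneg x y) (hf0 x)) hle
  have hnonneg : 0 ≤ fun z : V × V => K z.1 z.2 * f z.1 := fun z =>
    mul_nonneg (hK.nonneg z.1 z.2) (hf0 z.1)
  have hsum : Summable fun z : V × V => K z.1 z.2 * f z.1 :=
    (summable_prod_of_nonneg hnonneg).2 ⟨fun x => (hK.summable x).mul_right (f x), hrow⟩
  refine ⟨hsum, ?_⟩
  rw [hsum.tsum_prod, ← tsum_mul_left]
  exact hrow.tsum_le_tsum hle (hf.mul_left D)

lemma IsBoundedKernel.exists_powSum_grad_le (hK : IsBoundedKernel K) :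
    ∃ C, ∀ u : V → E, Memℓp u 2 → Memℓp (grad K u) 2 ∧ powSum 2 (grad K u) ≤ C * powSum 2 u := by
  obtain ⟨D, hD⟩ := hK.exists_tsum_fst_le
  refine ⟨4 * D, fun u hu => ?_⟩
  obtain ⟨hfst, hfst_le⟩ := hD (fun x => ‖u x‖ ^ 2) (fun _ => by positivity)
    (memℓp_two_iff_summable_norm_sq.1 hu)
  have hswap : ∀ z : V × V, K z.swap.1 z.swap.2 * ‖u z.swap.1‖ ^ 2 = K z.1 z.2 * ‖u z.2‖ ^ 2 :=
    fun z => by rw [Prod.fst_swap, Prod.snd_swap, hK.symm]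
  have hsnd : Summable fun z : V × V => K z.1 z.2 * ‖u z.2‖ ^ 2 := hfst.prod_symm.congr hswap
  have hsnd_eq :
      ∑' z : V × V, K z.1 z.2 * ‖u z.2‖ ^ 2 = ∑' z : V × V, K z.1 z.2 * ‖u z.1‖ ^ 2 :=
    (tsum_congr hswap).symm.trans
      ((Equiv.prodComm V V).tsum_eq fun z : V × V => K z.1 z.2 * ‖u z.1‖ ^ 2)
  have hle : ∀ z : V × V, ‖grad K u z‖ ^ 2 ≤
      2 * (K z.1 z.2 * ‖u z.1‖ ^ 2) + 2 * (K z.1 z.2 * ‖u z.2‖ ^ 2) := fun z => by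
    rw [hK.norm_grad_sq]
    linarith [mul_le_mul_of_nonneg_left (norm_sub_sq_le (u z.1) (u z.2)) (hK.nonneg z.1 z.2)]
  have hsum := (hfst.mul_left 2).add (hsnd.mul_left 2)
  have hgrad := hsum.of_nonneg_of_le (fun _ => by positivity) hle
  refine ⟨memℓp_two_iff_summable_norm_sq.2 hgrad, ?_⟩
  have htsum := hgrad.tsum_le_tsum hle hsum
  rw [(hfst.mul_left 2).tsum_add (hsnd.mul_left 2), tsum_mul_left, tsum_mul_left, hsnd_eq] at htsum
  simp only [powSum, Real.rpow_two]
  linarith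

lemma IsBoundedKernel.memℓp_grad (hK : IsBoundedKernel K) {u : V → E} (hu : Memℓp u 2) :
    Memℓp (grad K u) 2 :=
  (hK.exists_powSum_grad_le.choose_spec u hu).1

lemma IsBoundedKernel.summable_smul_sub [CompleteSpace E] (hK : IsBoundedKernel K) {u : V → E}
    (hu : Memℓp u 2) (x : V) : Summable fun y => K x y • (u x - u y) := by
  refine Summable.of_norm_bounded ((hK.summable x).mul_right (2 * √(powSum 2 u))) fun y => ?_
  rw [norm_smul, Real.norm_of_nonneg (hK.nonneg x y)]
  have hbound := norm_le_sqrt_of_powSum_two_le hu le_rfl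
  exact mul_le_mul_of_nonneg_left
    (by linarith [norm_sub_le (u x) (u y), hbound x, hbound y]) (hK.nonneg x y)

end Real

section Inner

variable [InnerProductSpace ℝ E] {K : V → V → ℝ}

lemma IsBoundedKernel.inner_grad (hK : IsBoundedKernel K) (u w : V → E) (z : V × V) :
    inner ℝ (grad K u z) (grad K w z) =
      K z.1 z.2 * inner ℝ (u z.1 - u z.2) (w z.1) +
        K z.2 z.1 * inner ℝ (u z.2 - u z.1) (w z.2) := by
  rw [grad_apply, grad_apply, real_inner_smul_left, real_inner_smul_right, ← mul_assoc,
    Real.mul_self_sqrt (hK.nonneg _ _), inner_sub_right, ← neg_sub (u z.1), inner_neg_left,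
    hK.symm z.2]
  ring

lemma IsBoundedKernel.summable_inner_sub (hK : IsBoundedKernel K) {u w : V → E} (hu : Memℓp u 2)
    (hw : Memℓp w 2) :
    Summable fun z : V × V => K z.1 z.2 * inner ℝ (u z.1 - u z.2) (w z.1) := by
  obtain ⟨D, hD⟩ := hK.exists_tsum_fst_le
  have hfst := (hD (fun x => ‖w x‖ ^ 2) (fun _ => by positivity)
    (memℓp_two_iff_summable_norm_sq.1 hw)).1
  refine Summable.of_norm_bounded
    ((memℓp_two_iff_summable_norm_sq.1 (hK.memℓp_grad hu)).add hfst) fun z => ?_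
  rw [hK.norm_grad_sq, ← mul_add, norm_mul, Real.norm_of_nonneg (hK.nonneg _ _)]
  refine mul_le_mul_of_nonneg_left ?_ (hK.nonneg _ _)
  nlinarith [norm_inner_le_norm (𝕜 := ℝ) (u z.1 - u z.2) (w z.1),
    sq_nonneg (‖u z.1 - u z.2‖ - ‖w z.1‖), sq_nonneg ‖u z.1 - u z.2‖, sq_nonneg ‖w z.1‖]

theorem IsBoundedKernel.tsum_inner_grad [CompleteSpace E] (hK : IsBoundedKernel K) {u w : V → E}
    (hu : Memℓp u 2) (hw : Memℓp w 2) :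
    ∑' z, inner ℝ (grad K u z) (grad K w z) = 2 * ∑' x, inner ℝ (laplacian K u x) (w x) := by
  set F : V × V → ℝ := fun z => K z.1 z.2 * inner ℝ (u z.1 - u z.2) (w z.1)
  have hF_sum : Summable F := hK.summable_inner_sub hu hw
  have hF_swap : ∑' z : V × V, F z.swap = ∑' z, F z := (Equiv.prodComm V V).tsum_eq F
  have hrow : ∀ x, ∑' y, F (x, y) = inner ℝ (laplacian K u x) (w x) := fun x => by
    rw [real_inner_comm, laplacian, ← innerSL_apply_apply ℝ,
      (innerSL ℝ (w x)).map_tsum (hK.summable_smul_sub hu x)]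
    exact tsum_congr fun y => by rw [innerSL_apply_apply, real_inner_smul_right, real_inner_comm]
  calc ∑' z, inner ℝ (grad K u z) (grad K w z)
      = ∑' z : V × V, (F z + F z.swap) := tsum_congr (hK.inner_grad u w)
    _ = ∑' z, F z + ∑' z : V × V, F z.swap := hF_sum.tsum_add hF_sum.prod_symm
    _ = 2 * ∑' z, F z := by rw [hF_swap, two_mul]
    _ = 2 * ∑' x, inner ℝ (laplacian K u x) (w x) := by rw [hF_sum.tsum_prod, tsum_congr hrow]

lemma powSum_two_add {ι : Type*} {f g : ι → E} (hf : Memℓp f 2) (hg : Memℓp g 2) :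
    powSum 2 (f + g) = powSum 2 f + 2 * ∑' i, inner ℝ (f i) (g i) + powSum 2 g := by
  have hf' := memℓp_two_iff_summable_norm_sq.1 hf
  have hg' := memℓp_two_iff_summable_norm_sq.1 hg
  have hfg : Summable fun i => inner ℝ (f i) (g i) := lp.summable_inner ⟨f, hf⟩ ⟨g, hg⟩
  simp only [powSum, Real.rpow_two, Pi.add_apply, norm_add_sq_real, ← tsum_mul_left]
  rw [(hf'.add (hfg.mul_left 2)).tsum_add hg', hf'.tsum_add (hfg.mul_left 2)]

theorem IsBoundedKernel.dirichlet_add [CompleteSpace E] (hK : IsBoundedKernel K) {u w : V → E}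
    (hu : Memℓp u 2) (hw : Memℓp w 2) :
    dirichlet K (u + w) =
      dirichlet K u + 2 * ∑' x, inner ℝ (laplacian K u x) (w x) + dirichlet K w := by
  simp only [dirichlet, map_add, powSum_two_add (hK.memℓp_grad hu) (hK.memℓp_grad hw),
    hK.tsum_inner_grad hu hw]
  ring

end Inner

end Dirichlet

section Energy

variable {V E : Type*} [NormedAddCommGroup E] [NormedSpace ℝ E] {K : V → V → ℝ} {p ν : ℝ}
  {u : V → E}

/-- The energy `H[u] = ⟨Lu, u⟩ / 2 - (p + 1)⁻¹ ∑ ‖u x‖ ^ (p + 1)` of the nonlinear Schrödinger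
equation with dispersion `L`. -/
def nlsEnergy (K : V → V → ℝ) (p : ℝ) (u : V → E) : ℝ :=
  1 / 2 * dirichlet K u - 1 / (p + 1) * powSum (p + 1) u

/-- The ground-state energy `I_ν`: the infimum of the energy over `E`-valued fields of mass `ν`. -/
def groundEnergy (E : Type*) [NormedAddCommGroup E] [NormedSpace ℝ E] (K : V → V → ℝ)
    (p ν : ℝ) : ℝ :=
  sInf (nlsEnergy K p '' {u : V → E | Memℓp u 2 ∧ powSum 2 u = ν})

lemma nlsEnergy_smul (c : ℝ) (u : V → E) :
    nlsEnergy K p (c • u) =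
      c ^ 2 * (1 / 2 * dirichlet K u) - |c| ^ (p + 1) * (1 / (p + 1) * powSum (p + 1) u) := by
  rw [nlsEnergy, dirichlet_smul, powSum_smul]
  ring

lemma nlsEnergy_zero (hp : p + 1 ≠ 0) : nlsEnergy K p (0 : V → E) = 0 := by
  simpa [Real.zero_rpow hp] using nlsEnergy_smul (K := K) (p := p) 0 (0 : V → E)

lemma nlsEnergy_comp_equiv {σ : V ≃ V} (hσ : ∀ x y, K (σ x) (σ y) = K x y) (u : V → E) :
    nlsEnergy K p (u ∘ σ) = nlsEnergy K p u := by
  rw [nlsEnergy, dirichlet_comp_equiv hσ, powSum_comp_equiv, nlsEnergy]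

lemma neg_le_nlsEnergy_of_norm_le (hp : 1 < p) (hu : Memℓp u 2) {R : ℝ} (hR : ∀ x, ‖u x‖ ≤ R) :
    -(1 / (p + 1) * (R ^ (p - 1) * powSum 2 u)) ≤ nlsEnergy K p u := by
  have hV : powSum (p + 1) u ≤ R ^ (p - 1) * powSum 2 u := by
    simpa only [show p + 1 - 2 = p - 1 by ring] using
      powSum_le_of_norm_le (by linarith : 2 ≤ p + 1) hu hR
  have hV' := mul_le_mul_of_nonneg_left hV (by positivity : 0 ≤ 1 / (p + 1))
  rw [nlsEnergy]
  linarith [dirichlet_nonneg K u]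

lemma groundEnergy_le (hp : 1 < p) (hu : Memℓp u 2) (hm : powSum 2 u = ν) :
    groundEnergy E K p ν ≤ nlsEnergy K p u := by
  refine csInf_le ⟨-(1 / (p + 1) * (√ν ^ (p - 1) * ν)), ?_⟩ (Set.mem_image_of_mem _ ⟨hu, hm⟩)
  rintro _ ⟨v, ⟨hv, rfl⟩, rfl⟩
  exact neg_le_nlsEnergy_of_norm_le hp hv (norm_le_sqrt_of_powSum_two_le hv le_rfl)

lemma groundEnergy_le_rescale (hp : 1 < p) (hν : 0 < ν) (hu : Memℓp u 2) (hu0 : u ≠ 0) :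
    groundEnergy E K p ν ≤ ν / powSum 2 u * (1 / 2 * dirichlet K u) -
      (ν / powSum 2 u) ^ ((p + 1) / 2) * (1 / (p + 1) * powSum (p + 1) u) := by
  have hM : 0 < powSum 2 u := powSum_pos le_rfl hu hu0
  have hr : 0 ≤ ν / powSum 2 u := by positivity
  have hmass : powSum 2 (√(ν / powSum 2 u) • u) = ν := by
    rw [powSum_smul, Real.rpow_two, sq_abs, Real.sq_sqrt hr, div_mul_cancel₀ _ hM.ne']
  have hpow : |√(ν / powSum 2 u)| ^ (p + 1) = (ν / powSum 2 u) ^ ((p + 1) / 2) := by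
    rw [abs_of_nonneg (Real.sqrt_nonneg _), Real.sqrt_eq_rpow, ← Real.rpow_mul hr,
      one_div_mul_eq_div]
  simpa only [nlsEnergy_smul, hpow, Real.sq_sqrt hr] using
    groundEnergy_le (K := K) hp (hu.const_smul √(ν / powSum 2 u)) hmass

-- Scaling up to mass `ν` multiplies the potential term by more than it does the Dirichlet form.
lemma powSum_two_mul_groundEnergy_lt (hp : 1 < p) (hu : Memℓp u 2) (hu0 : u ≠ 0)
    (hlt : powSum 2 u < ν) : powSum 2 u * groundEnergy E K p ν < ν * nlsEnergy K p u := by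
  have hM : 0 < powSum 2 u := powSum_pos le_rfl hu hu0
  have hV : 0 < 1 / (p + 1) * powSum (p + 1) u :=
    mul_pos (by positivity) (powSum_pos (by linarith) hu hu0)
  have hr : ν / powSum 2 u < (ν / powSum 2 u) ^ ((p + 1) / 2) :=
    Real.self_lt_rpow_of_one_lt ((one_lt_div hM).2 hlt) (by linarith)
  have hI : groundEnergy E K p ν < ν / powSum 2 u * nlsEnergy K p u := by
    rw [nlsEnergy, mul_sub]
    exact (groundEnergy_le_rescale hp (hM.trans hlt) hu hu0).trans_lt
      (sub_lt_sub_left (mul_lt_mul_of_pos_right hr hV) _)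
  rwa [div_mul_eq_mul_div, lt_div_iff₀' hM] at hI

lemma powSum_two_mul_groundEnergy_le (hp : 1 < p) (hu : Memℓp u 2)
    (hle : powSum 2 u ≤ ν) : powSum 2 u * groundEnergy E K p ν ≤ ν * nlsEnergy K p u := by
  rcases hle.lt_or_eq with hlt | heq
  · by_cases hu0 : u = 0
    · simp [hu0, powSum, nlsEnergy_zero (by linarith : p + 1 ≠ 0)]
    · exact (powSum_two_mul_groundEnergy_lt hp hu hu0 hlt).le
  · rw [heq]
    exact mul_le_mul_of_nonneg_left (groundEnergy_le hp hu heq) (heq ▸ powSum_nonneg 2 u)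

lemma exists_le_norm_of_nlsEnergy_lt (hp : 1 < p) (hν : 0 < ν) {h : ℝ} (hh : h < 0) :
    ∃ δ > 0, ∀ u : V → E, Memℓp u 2 → powSum 2 u = ν → nlsEnergy K p u < h →
      ∃ x, δ ≤ ‖u x‖ := by
  have hc : 0 < -h * (p + 1) / ν := by have := neg_pos.2 hh; positivity
  refine ⟨(-h * (p + 1) / ν) ^ (p - 1)⁻¹, by positivity, fun u hu hm hH => ?_⟩
  by_contra! hsmall
  have hlow := neg_le_nlsEnergy_of_norm_le (K := K) hp hu fun x => (hsmall x).le
  rw [Real.rpow_inv_rpow hc.le (by linarith), hm] at hlow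
  have hh_eq : -(1 / (p + 1) * (-h * (p + 1) / ν * ν)) = h := by
    have hp0 : p + 1 ≠ 0 := by positivity
    field_simp
  linarith

/-- The frequency `ω` of a ground state `u` of mass `ν`: the Lagrange multiplier of the mass
constraint. -/
def frequency (K : V → V → ℝ) (p ν : ℝ) (u : V → E) : ℝ :=
  (powSum (p + 1) u - dirichlet K u) / ν

lemma frequency_pos (hp : 1 < p) (hν : 0 < ν) (hneg : nlsEnergy K p u < 0) :
    0 < frequency K p ν u := by
  have hV : (p + 1) / 2 * dirichlet K u < powSum (p + 1) u := by
    rw [nlsEnergy, sub_neg, one_div_mul_eq_div (p + 1), lt_div_iff₀ (by positivity)] at hneg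
    linarith
  have hD : dirichlet K u ≤ (p + 1) / 2 * dirichlet K u :=
    le_mul_of_one_le_left (dirichlet_nonneg K u) (by linarith)
  exact div_pos (sub_pos.2 (hD.trans_lt hV)) hν

end Energy

section Compactness

variable {V α E : Type*} [NormedAddCommGroup E] [NormedSpace ℝ E] {K : V → V → ℝ} {p ν : ℝ}
  {l : Filter α} {v : α → V → E} {Q : V → E}

/-- A ground state of mass `ν`: a field attaining the infimum `I_ν`. -/
structure IsGroundState (K : V → V → ℝ) (p ν : ℝ) (u : V → E) : Prop where
  memℓp : Memℓp u 2
  mass_eq : powSum 2 u = ν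
  energy_eq : nlsEnergy K p u = groundEnergy E K p ν

lemma IsBoundedKernel.tendsto_dirichlet_sub_dirichlet_sub (hK : IsBoundedKernel K)
    (hv : ∀ k, Memℓp (v k) 2) (hQ : Memℓp Q 2) (hm : ∀ k, powSum 2 (v k) = ν)
    (hlim : ∀ x, Tendsto (fun k => v k x) l (𝓝 (Q x))) :
    Tendsto (fun k => dirichlet K (v k) - dirichlet K (v k - Q)) l (𝓝 (dirichlet K Q)) := by
  obtain ⟨C, hC⟩ := hK.exists_powSum_grad_le (E := E)
  have hgrad := tendsto_powSum_sub_powSum_sub le_rfl (fun k => hK.memℓp_grad (hv k))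
    (hK.memℓp_grad hQ) (fun k => (hC _ (hv k)).2.trans_eq (by rw [hm]))
    fun z => ((hlim z.1).sub (hlim z.2)).const_smul _
  simpa only [dirichlet, map_sub, mul_sub] using hgrad.const_mul (1 / 2)

lemma IsBoundedKernel.tendsto_nlsEnergy_sub_nlsEnergy_sub (hK : IsBoundedKernel K) (hp : 1 < p)
    (hv : ∀ k, Memℓp (v k) 2) (hQ : Memℓp Q 2) (hm : ∀ k, powSum 2 (v k) = ν)
    (hlim : ∀ x, Tendsto (fun k => v k x) l (𝓝 (Q x))) :
    Tendsto (fun k => nlsEnergy K p (v k) - nlsEnergy K p (v k - Q)) l (𝓝 (nlsEnergy K p Q)) := by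
  have hD := (hK.tendsto_dirichlet_sub_dirichlet_sub hv hQ hm hlim).const_mul (1 / 2)
  have hV := (tendsto_powSum_sub_powSum_sub (by linarith : 2 ≤ p + 1) hv hQ (fun k => (hm k).le)
    hlim).const_mul (1 / (p + 1))
  refine (hD.sub hV).congr fun k => ?_
  simp only [nlsEnergy]
  ring

theorem IsBoundedKernel.isGroundState_of_tendsto [l.NeBot] (hK : IsBoundedKernel K) (hp : 1 < p)
    (hv : ∀ k, Memℓp (v k) 2) (hm : ∀ k, powSum 2 (v k) = ν)
    (hmin : Tendsto (fun k => nlsEnergy K p (v k)) l (𝓝 (groundEnergy E K p ν)))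
    (hlim : ∀ x, Tendsto (fun k => v k x) l (𝓝 (Q x))) (hQ0 : Q ≠ 0) :
    IsGroundState K p ν Q ∧ Tendsto (fun k => powSum 2 (v k - Q)) l (𝓝 0) := by
  obtain ⟨hQ, hQν⟩ := memℓp_two_and_powSum_two_le_of_tendsto hv (fun k => (hm k).le) hlim
  have hQpos : 0 < powSum 2 Q := powSum_pos le_rfl hQ hQ0
  have hν : 0 < ν := hQpos.trans_le hQν
  have hmass : Tendsto (fun k => powSum 2 (v k - Q)) l (𝓝 (ν - powSum 2 Q)) := by
    simpa only [hm, sub_sub_cancel] using (tendsto_powSum_sub_powSum_sub le_rfl hv hQ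
      (fun k => (hm k).le) hlim).const_sub ν
  have henergy : Tendsto (fun k => nlsEnergy K p (v k - Q)) l
      (𝓝 (groundEnergy E K p ν - nlsEnergy K p Q)) := by
    simpa only [sub_sub_cancel] using
      hmin.sub (hK.tendsto_nlsEnergy_sub_nlsEnergy_sub hp hv hQ hm hlim)
  have hres : (ν - powSum 2 Q) * groundEnergy E K p ν ≤
      ν * (groundEnergy E K p ν - nlsEnergy K p Q) := by
    refine le_of_tendsto_of_tendsto (hmass.mul_const _) (henergy.const_mul ν) ?_
    filter_upwards [hmass.eventually_lt_const (sub_lt_self ν hQpos)] with k hk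
    exact powSum_two_mul_groundEnergy_le hp ((hv k).sub hQ) hk.le
  have hfull : powSum 2 Q = ν := by
    by_contra hne
    linarith [powSum_two_mul_groundEnergy_lt (K := K) hp hQ hQ0 (lt_of_le_of_ne hQν hne)]
  refine ⟨⟨hQ, hfull, le_antisymm ?_ (groundEnergy_le hp hQ hfull)⟩, by simpa [hfull] using hmass⟩
  rw [hfull] at hres
  exact le_of_mul_le_mul_left (by linarith) hν

end Compactness

section EulerLagrange

variable {V E : Type*} [NormedAddCommGroup E] [InnerProductSpace ℝ E] {K : V → V → ℝ} {p ν : ℝ}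
  {u : V → E}

lemma hasDerivAt_powSum_add_smul_single [DecidableEq V] {s : ℝ} (hs : 2 ≤ s) (hu : Memℓp u 2)
    (x : V) (e : E) :
    HasDerivAt (fun t : ℝ => powSum s (u + Pi.single x (t • e)))
      (s * ‖u x‖ ^ (s - 2) * inner ℝ (u x) e) 0 := by
  have hupdate : ∀ t : ℝ, u + Pi.single x (t • e) = Function.update u x (u x + t • e) := fun t => by
    ext y
    rcases eq_or_ne y x with rfl | hy <;> simp [*]
  simp only [hupdate, powSum_update hs hu]
  have hline : HasDerivAt (fun t : ℝ => u x + t • e) e 0 := by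
    simpa using ((hasDerivAt_id (0 : ℝ)).smul_const e).const_add (u x)
  have hnorm : HasFDerivAt (fun y : E => ‖y‖ ^ s) ((s * ‖u x‖ ^ (s - 2)) • innerSL ℝ (u x))
      (u x + (0 : ℝ) • e) := by
    rw [zero_smul, add_zero]
    exact hasFDerivAt_norm_rpow (u x) (by linarith : 1 < s)
  simpa [Function.comp_def, mul_assoc] using
    ((hnorm.comp_hasDerivAt 0 hline).sub_const (‖u x‖ ^ s)).add_const (powSum s u)

variable [CompleteSpace E]

lemma IsBoundedKernel.hasDerivAt_dirichlet_add_smul_single [DecidableEq V]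
    (hK : IsBoundedKernel K) (hu : Memℓp u 2) (x : V) (e : E) :
    HasDerivAt (fun t : ℝ => dirichlet K (u + Pi.single x (t • e)))
      (2 * inner ℝ (laplacian K u x) e) 0 := by
  have hpair : ∀ t : ℝ, ∑' y, inner ℝ (laplacian K u y) ((Pi.single x (t • e) : V → E) y) =
      t * inner ℝ (laplacian K u x) e := fun t => by
    rw [tsum_eq_single x fun y hy => by simp [hy]]
    simp [real_inner_smul_right]
  have hexpand : ∀ t : ℝ, dirichlet K (u + Pi.single x (t • e)) = dirichlet K u +
      2 * (t * inner ℝ (laplacian K u x) e) + t ^ 2 * dirichlet K (Pi.single x e : V → E) :=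
    fun t => by
      rw [hK.dirichlet_add hu (memℓp_two_single x _), hpair, Pi.single_smul, dirichlet_smul]
  simp only [hexpand]
  have hlin := (((hasDerivAt_id (0 : ℝ)).mul_const (inner ℝ (laplacian K u x) e)).const_mul
    2).const_add (dirichlet K u)
  have hquad := ((hasDerivAt_id (0 : ℝ)).pow 2).mul_const (dirichlet K (Pi.single x e : V → E))
  simpa using hlin.fun_add hquad

lemma hasDerivAt_rescale {m P W : ℝ → ℝ} {m' P' W' : ℝ} (s : ℝ) (hν : 0 < ν) (hm0 : m 0 = ν)
    (hm : HasDerivAt m m' 0) (hP : HasDerivAt P P' 0) (hW : HasDerivAt W W' 0) :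
    HasDerivAt (fun t => ν / m t * P t - (ν / m t) ^ s * W t)
      (P' - W' + (s * W 0 - P 0) / ν * m') 0 := by
  have hr : HasDerivAt (fun t => ν / m t) (-(m' / ν)) 0 := by
    refine ((hasDerivAt_const 0 ν).div hm (hm0 ▸ hν.ne')).congr_deriv ?_
    rw [hm0]
    field_simp
    ring
  have hr0 : ν / m 0 = 1 := by rw [hm0, div_self hν.ne']
  refine ((hr.mul hP).sub ((hr.rpow_const (Or.inl (by simp [hr0]))).mul hW)).congr_deriv ?_
  simp only [hr0, Real.one_rpow]
  field_simp
  ring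

theorem IsGroundState.laplacian_sub_smul (hK : IsBoundedKernel K) (hp : 1 < p) (hν : 0 < ν)
    (hu : IsGroundState K p ν u) (x : V) :
    laplacian K u x - ‖u x‖ ^ (p - 1) • u x = -frequency K p ν u • u x := by
  classical
  refine ext_inner_right ℝ fun e => ?_
  have hmass := hasDerivAt_powSum_add_smul_single le_rfl hu.memℓp x e
  have hderiv := hasDerivAt_rescale (ν := ν) ((p + 1) / 2) hν (by simp [hu.mass_eq]) hmass
    ((hK.hasDerivAt_dirichlet_add_smul_single hu.memℓp x e).const_mul (1 / 2))
    ((hasDerivAt_powSum_add_smul_single (by linarith : 2 ≤ p + 1) hu.memℓp x e).const_mul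
      (1 / (p + 1)))
  have hlocal : IsLocalMin (fun t : ℝ => ν / powSum 2 (u + Pi.single x (t • e)) *
      (1 / 2 * dirichlet K (u + Pi.single x (t • e))) -
      (ν / powSum 2 (u + Pi.single x (t • e))) ^ ((p + 1) / 2) *
      (1 / (p + 1) * powSum (p + 1) (u + Pi.single x (t • e)))) 0 := by
    have hne : ∀ᶠ t in 𝓝 (0 : ℝ), 0 < powSum 2 (u + Pi.single x (t • e)) :=
      hmass.continuousAt.eventually_const_lt (by simpa [hu.mass_eq] using hν)
    filter_upwards [hne] with t ht
    have hne0 : u + Pi.single x (t • e) ≠ 0 := fun h0 => ht.ne' (by rw [h0]; simp [powSum])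
    have hle := groundEnergy_le_rescale (K := K) hp hν
      (hu.memℓp.add (memℓp_two_single x (t • e))) hne0
    simpa [hu.mass_eq, div_self hν.ne', ← hu.energy_eq, nlsEnergy] using hle
  have hzero : inner ℝ (laplacian K u x) e - ‖u x‖ ^ (p - 1) * inner ℝ (u x) e +
      frequency K p ν u * inner ℝ (u x) e = 0 := by
    have hp0 : p + 1 ≠ 0 := by positivity
    rw [← hlocal.hasDerivAt_eq_zero hderiv, show p + 1 - 2 = p - 1 by ring, zero_smul,
      Pi.single_zero, add_zero, sub_self, Real.rpow_zero, frequency]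
    field_simp
  rw [inner_sub_left, real_inner_smul_left, real_inner_smul_left]
  linarith

end EulerLagrange

section Rigidity

variable {V E : Type*} [NormedAddCommGroup E] [NormedSpace ℝ E] {K : V → V → ℝ} {p ν : ℝ}
  {u : V → E}

lemma norm_smul_unit {e : E} (he : ‖e‖ = 1) {r : ℝ} (hr : 0 ≤ r) : ‖r • e‖ = r := by
  rw [norm_smul, he, mul_one, Real.norm_of_nonneg hr]

lemma nlsEnergy_smul_unit {e : E} (he : ‖e‖ = 1) (q : V → ℝ) :
    nlsEnergy K p (fun x => q x • e) = nlsEnergy K p q := by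
  have hgrad : ∀ z, ‖grad K (fun x => q x • e) z‖ = ‖grad K q z‖ := fun z => by
    rw [grad_apply, grad_apply, ← sub_smul, norm_smul, norm_smul, norm_smul, he, mul_one]
  have hnorm : ∀ x, ‖q x • e‖ = ‖q x‖ := fun x => by rw [norm_smul, he, mul_one]
  rw [nlsEnergy, dirichlet, powSum_congr_norm 2 hgrad, powSum_congr_norm (p + 1) hnorm, nlsEnergy,
    dirichlet]

lemma norm_grad_norm_le (K : V → V → ℝ) (u : V → E) (z : V × V) :
    ‖grad K (fun x => ‖u x‖) z‖ ≤ ‖grad K u z‖ := by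
  rw [grad_apply, grad_apply, norm_smul, norm_smul, Real.norm_eq_abs (‖u z.1‖ - ‖u z.2‖)]
  exact mul_le_mul_of_nonneg_left (abs_norm_sub_norm_le _ _) (norm_nonneg _)

lemma IsBoundedKernel.dirichlet_norm_le (hK : IsBoundedKernel K) (hu : Memℓp u 2) :
    dirichlet K (fun x => ‖u x‖) ≤ dirichlet K u := by
  refine mul_le_mul_of_nonneg_left ?_ (by norm_num)
  exact (summable_norm_rpow le_rfl (hK.memℓp_grad hu.norm)).tsum_le_tsum
    (fun z => Real.rpow_le_rpow (norm_nonneg _) (norm_grad_norm_le K u z) zero_le_two)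
    (summable_norm_rpow le_rfl (hK.memℓp_grad hu))

lemma IsGroundState.norm_smul_const (hK : IsBoundedKernel K) (hp : 1 < p)
    (hu : IsGroundState K p ν u) {e : E} (he : ‖e‖ = 1) :
    IsGroundState K p ν (fun x => ‖u x‖ • e) := by
  have hnorm : ∀ x, ‖‖u x‖ • e‖ = ‖u x‖ := fun x => norm_smul_unit he (norm_nonneg _)
  have hmem : Memℓp (fun x => ‖u x‖ • e) 2 := (memℓp_two_congr_norm hnorm).2 hu.memℓp
  have hmass : powSum 2 (fun x => ‖u x‖ • e) = ν :=
    (powSum_congr_norm 2 hnorm).trans hu.mass_eq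
  refine ⟨hmem, hmass, le_antisymm ?_ (groundEnergy_le hp hmem hmass)⟩
  rw [← hu.energy_eq, nlsEnergy_smul_unit he, nlsEnergy, nlsEnergy,
    powSum_congr_norm (p + 1) fun x => norm_norm (u x)]
  linarith [hK.dirichlet_norm_le hu.memℓp]

lemma IsGroundState.dirichlet_norm_eq (hK : IsBoundedKernel K) (hp : 1 < p)
    (hu : IsGroundState K p ν u) {e : E} (he : ‖e‖ = 1) :
    dirichlet K (fun x => ‖u x‖) = dirichlet K u := by
  have henergy := (hu.norm_smul_const hK hp he).energy_eq
  rw [← hu.energy_eq, nlsEnergy_smul_unit he, nlsEnergy, nlsEnergy,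
    powSum_congr_norm (p + 1) fun x => norm_norm (u x)] at henergy
  linarith

lemma IsGroundState.norm_sub_eq (hK : IsBoundedKernel K) (hp : 1 < p)
    (hu : IsGroundState K p ν u) {e : E} (he : ‖e‖ = 1) {x y : V} (hxy : 0 < K x y) :
    ‖u x - u y‖ = |‖u x‖ - ‖u y‖| := by
  by_contra hne
  have hlt : ‖grad K (fun x => ‖u x‖) (x, y)‖ < ‖grad K u (x, y)‖ := by
    rw [grad_apply, grad_apply, norm_smul, norm_smul, Real.norm_eq_abs (‖u x‖ - ‖u y‖)]
    exact mul_lt_mul_of_pos_left ((abs_norm_sub_norm_le _ _).lt_of_ne' hne)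
      (norm_pos_iff.2 (Real.sqrt_pos.2 hxy).ne')
  have hpow : powSum 2 (grad K fun x => ‖u x‖) < powSum 2 (grad K u) :=
    (summable_norm_rpow le_rfl (hK.memℓp_grad hu.memℓp.norm)).tsum_lt_tsum
      (fun z => Real.rpow_le_rpow (norm_nonneg _) (norm_grad_norm_le K u z) zero_le_two)
      (Real.rpow_lt_rpow (norm_nonneg _) hlt two_pos)
      (summable_norm_rpow le_rfl (hK.memℓp_grad hu.memℓp))
  have heq := hu.dirichlet_norm_eq hK hp he
  rw [dirichlet, dirichlet] at heq
  linarith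

lemma IsBoundedKernel.dirichlet_indicator_add_dirichlet_indicator_compl (hK : IsBoundedKernel K)
    (hu : Memℓp u 2) {A : Set V} (hA : ∀ a ∈ A, ∀ b ∉ A, K a b = 0) :
    dirichlet K (A.indicator u) + dirichlet K (Aᶜ.indicator u) = dirichlet K u := by
  classical
  have hA' : ∀ a ∈ A, ∀ b ∉ A, K b a = 0 := fun a ha b hb => (hK.symm b a).trans (hA a ha b hb)
  have hsplit : ∀ z : V × V, ‖grad K (A.indicator u) z‖ ^ (2 : ℝ) +
      ‖grad K (Aᶜ.indicator u) z‖ ^ (2 : ℝ) = ‖grad K u z‖ ^ (2 : ℝ) := by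
    rintro ⟨x, y⟩
    by_cases hx : x ∈ A <;> by_cases hy : y ∈ A <;> simp [grad_apply, *]
  rw [dirichlet, dirichlet, dirichlet, ← mul_add, powSum, powSum,
    ← (summable_norm_rpow le_rfl (hK.memℓp_grad (memℓp_two_indicator hu A))).tsum_add
      (summable_norm_rpow le_rfl (hK.memℓp_grad (memℓp_two_indicator hu Aᶜ))), powSum]
  simp only [hsplit]

theorem IsGroundState.eq_zero_of_decoupled (hK : IsBoundedKernel K) (hp : 1 < p)
    (hu : IsGroundState K p ν u) {A : Set V} (hA : ∀ a ∈ A, ∀ b ∉ A, K a b = 0) {o : V}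
    (ho : o ∈ A) (hu0 : u o ≠ 0) {x : V} (hx : x ∉ A) : u x = 0 := by
  by_contra hux
  have hne : A.indicator u ≠ 0 := Function.ne_iff.2 ⟨o, by simpa [ho] using hu0⟩
  have hne' : Aᶜ.indicator u ≠ 0 := Function.ne_iff.2 ⟨x, by simpa [hx] using hux⟩
  have hmem := memℓp_two_indicator hu.memℓp A
  have hmem' := memℓp_two_indicator hu.memℓp Aᶜ
  have hmass := powSum_indicator_add_powSum_indicator_compl le_rfl hu.memℓp A
  have hpot :=
    powSum_indicator_add_powSum_indicator_compl (by linarith : 2 ≤ p + 1) hu.memℓp A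
  have henergy : nlsEnergy K p (A.indicator u) + nlsEnergy K p (Aᶜ.indicator u) =
      groundEnergy E K p ν := by
    rw [← hu.energy_eq, nlsEnergy, nlsEnergy, nlsEnergy, ← hpot,
      ← hK.dirichlet_indicator_add_dirichlet_indicator_compl hu.memℓp hA]
    ring
  rw [hu.mass_eq] at hmass
  have hlt : powSum 2 (A.indicator u) * groundEnergy E K p ν <
      ν * nlsEnergy K p (A.indicator u) :=
    powSum_two_mul_groundEnergy_lt hp hmem hne (by linarith [powSum_pos le_rfl hmem' hne'])
  have hlt' : powSum 2 (Aᶜ.indicator u) * groundEnergy E K p ν <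
      ν * nlsEnergy K p (Aᶜ.indicator u) :=
    powSum_two_mul_groundEnergy_lt hp hmem' hne' (by linarith [powSum_pos le_rfl hmem hne])
  have hsum := add_lt_add hlt hlt'
  rw [← add_mul, ← mul_add, hmass, henergy] at hsum
  exact hsum.false

end Rigidity

section Phase

variable {V E : Type*} [NormedAddCommGroup E] [InnerProductSpace ℝ E] [CompleteSpace E]
  {K : V → V → ℝ} {p ν : ℝ} {u : V → E}

theorem IsGroundState.neg_frequency_mul_eq (hK : IsBoundedKernel K) (hp : 1 < p) (hν : 0 < ν)
    {q : V → ℝ} {e : E} (he : ‖e‖ = 1) (hq : ∀ x, 0 ≤ q x)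
    (hu : IsGroundState K p ν fun x => q x • e) (x : V) :
    -frequency K p ν (fun x => q x • e) * q x = laplacian K q x - q x ^ p := by
  have hq_mem : Memℓp q 2 :=
    (memℓp_two_congr_norm fun x => by rw [norm_smul, he, mul_one]).1 hu.memℓp
  have hlap : laplacian K (fun x => q x • e) x = laplacian K q x • e := by
    simp only [laplacian, ← sub_smul, ← smul_assoc]
    exact (hK.summable_smul_sub hq_mem x).tsum_smul_const e
  have hpow : q x ^ (p - 1) * q x = q x ^ p := by
    rw [← Real.rpow_add_one' (hq x) (by linarith), sub_add_cancel]
  have hEL := hu.laplacian_sub_smul hK hp hν x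
  rw [hlap, norm_smul_unit he (hq x), smul_smul, smul_smul, hpow, ← sub_smul] at hEL
  exact (smul_left_injective ℝ (norm_ne_zero_iff.1 (by simp [he])) hEL).symm

-- Where the profile `‖u‖` vanishes, its Euler–Lagrange equation reads `∑ K b y ‖u y‖ = 0`.
lemma IsGroundState.eq_zero_of_neighbor (hK : IsBoundedKernel K) (hp : 1 < p) (hν : 0 < ν)
    (hu : IsGroundState K p ν u) {e : E} (he : ‖e‖ = 1) {a b : V} (hab : 0 < K a b)
    (hb : u b = 0) : u a = 0 := by
  have hEL := (hu.norm_smul_const hK hp he).neg_frequency_mul_eq hK hp hν he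
    (fun x => norm_nonneg (u x)) b
  have hsum : Summable fun y => K b y * ‖u y‖ := by
    simpa [hb] using (hK.summable_smul_sub hu.memℓp.norm b).neg
  have htsum : ∑' y, K b y * ‖u y‖ = 0 := by
    simpa [hb, laplacian, tsum_neg, Real.zero_rpow (by linarith : p ≠ 0)] using hEL.symm
  have hzero := (hasSum_zero_iff_of_nonneg fun y => mul_nonneg (hK.nonneg b y)
    (norm_nonneg (u y))).1 (htsum ▸ hsum.hasSum)
  simpa [hK.symm b a, hab.ne'] using congrFun hzero a

theorem IsGroundState.sameRay (hK : IsBoundedKernel K) (hp : 1 < p) (hν : 0 < ν)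
    (hu : IsGroundState K p ν u) {o : V} (ho : u o ≠ 0) (x : V) : SameRay ℝ (u o) (u x) := by
  have he : ‖‖u o‖⁻¹ • u o‖ = 1 := norm_smul_inv_norm ho
  set A : Set V := {x | u x ≠ 0 ∧ SameRay ℝ (u o) (u x)}
  have hA : ∀ a ∈ A, ∀ b ∉ A, K a b = 0 := by
    rintro a ⟨ha0, ha⟩ b hb
    by_contra hne
    have hab : 0 < K a b := lt_of_le_of_ne' (hK.nonneg a b) hne
    have hb0 : u b ≠ 0 := fun h => ha0 (hu.eq_zero_of_neighbor hK hp hν he hab h)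
    have hray : SameRay ℝ (u a) (u b) := sameRay_iff_norm_sub.2 (hu.norm_sub_eq hK hp he hab)
    exact hb ⟨hb0, ha.trans hray fun h => absurd h ha0⟩
  by_cases hx : x ∈ A
  · exact hx.2
  · rw [hu.eq_zero_of_decoupled hK hp hA ⟨ho, SameRay.rfl⟩ ho hx]
    exact SameRay.zero_right _

theorem IsGroundState.exists_eq_norm_smul (hK : IsBoundedKernel K) (hp : 1 < p) (hν : 0 < ν)
    (hu : IsGroundState K p ν u) : ∃ e : E, ‖e‖ = 1 ∧ u = fun x => ‖u x‖ • e := by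
  obtain ⟨o, ho⟩ : ∃ o, u o ≠ 0 := by
    by_contra! hzero
    exact hν.ne' (by simp [← hu.mass_eq, powSum, hzero])
  refine ⟨‖u o‖⁻¹ • u o, norm_smul_inv_norm ho, funext fun x => ?_⟩
  rw [smul_comm, ← (hu.sameRay hK hp hν ho x).norm_smul_eq, inv_smul_smul₀ (norm_ne_zero_iff.2 ho)]

end Phase

section Concentration

variable {V α E : Type*} [NormedAddCommGroup E] {p ν : ℝ} {K : V → V → ℝ}

lemma exists_subseq_tendsto_pi [Countable V] [ProperSpace E] {R : ℝ} {v : ℕ → V → E}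
    (hR : ∀ k x, ‖v k x‖ ≤ R) :
    ∃ (Q : V → E) (φ : ℕ → ℕ), StrictMono φ ∧
      ∀ x, Tendsto (fun k => v (φ k) x) atTop (𝓝 (Q x)) := by
  have hcompact : IsCompact (Set.univ.pi fun _ : V => Metric.closedBall (0 : E) R) :=
    isCompact_univ_pi fun _ => isCompact_closedBall 0 R
  obtain ⟨Q, -, φ, hφ, hlim⟩ := hcompact.tendsto_subseq fun k =>
    Set.mem_univ_pi.2 fun x => mem_closedBall_zero_iff.2 (hR k x)
  exact ⟨Q, φ, hφ, fun x => tendsto_pi_nhds.1 hlim x⟩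

lemma exists_eventually_le_norm_vadd [NormedSpace ℝ E] (G : Type*) [AddGroup G] [AddAction G V]
    [AddAction.IsPretransitive G V] {l : Filter α} [l.NeBot] (hp : 1 < p) (hν : 0 < ν) {I : ℝ}
    (hI : I < 0) {u : α → V → E} (hu : ∀ k, Memℓp (u k) 2) (hm : ∀ k, powSum 2 (u k) = ν)
    (hlim : Tendsto (fun k => nlsEnergy K p (u k)) l (𝓝 I)) :
    ∃ o : V, ∃ δ > 0, ∀ᶠ k in l, ∃ g : G, δ ≤ ‖u k (g +ᵥ o)‖ := by
  obtain ⟨δ, hδ, hlarge⟩ :=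
    exists_le_norm_of_nlsEnergy_lt (K := K) (E := E) hp hν (by linarith : I / 2 < 0)
  have hev : ∀ᶠ k in l, ∃ x, δ ≤ ‖u k x‖ :=
    (hlim.eventually_lt_const (by linarith : I < I / 2)).mono fun k hk =>
      hlarge (u k) (hu k) (hm k) hk
  obtain ⟨_, o, _⟩ := hev.exists
  refine ⟨o, δ, hδ, hev.mono fun k ⟨x, hx⟩ => ?_⟩
  obtain ⟨g, rfl⟩ := AddAction.exists_vadd_eq G o x
  exact ⟨g, hx⟩

theorem exists_subseq_vadd_tendsto_isGroundState {G : Type*} [Countable V] [AddGroup G]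
    [AddAction G V] [AddAction.IsPretransitive G V] [NormedSpace ℝ E] [ProperSpace E]
    (hK : IsBoundedKernel K) (hinv : ∀ (g : G) x y, K (g +ᵥ x) (g +ᵥ y) = K x y) (hp : 1 < p)
    (hν : 0 < ν) (hneg : groundEnergy E K p ν < 0) {u : ℕ → V → E} (hu : ∀ k, Memℓp (u k) 2)
    (hm : ∀ k, powSum 2 (u k) = ν)
    (hmin : Tendsto (fun k => nlsEnergy K p (u k)) atTop (𝓝 (groundEnergy E K p ν))) :
    ∃ (nk : ℕ → ℕ) (g : ℕ → G) (Q : V → E), StrictMono nk ∧ IsGroundState K p ν Q ∧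
      Tendsto (fun k => powSum 2 fun x => u (nk k) (g k +ᵥ x) - Q x) atTop (𝓝 0) := by
  obtain ⟨o, δ, hδ, hev⟩ := exists_eventually_le_norm_vadd G hp hν hneg hu hm hmin
  obtain ⟨N, hN⟩ := eventually_atTop.1 hev
  choose g hg using fun k => hN (k + N) (Nat.le_add_left N k)
  set v : ℕ → V → E := fun k => u (k + N) ∘ AddAction.toPerm (g k)
  have hv : ∀ k, Memℓp (v k) 2 := fun k => memℓp_two_comp_equiv (hu _) _
  have hvm : ∀ k, powSum 2 (v k) = ν := fun k => (powSum_comp_equiv 2 _ _).trans (hm _)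
  have hvE : ∀ k, nlsEnergy K p (v k) = nlsEnergy K p (u (k + N)) := fun k =>
    nlsEnergy_comp_equiv (hinv (g k)) _
  obtain ⟨Q, φ, hφ, hQ⟩ := exists_subseq_tendsto_pi fun k =>
    norm_le_sqrt_of_powSum_two_le (hv k) (hvm k).le
  have hshift : StrictMono fun k => φ k + N := hφ.add_const N
  have hQ0 : Q ≠ 0 := fun h0 => hδ.not_ge <| by
    simpa [h0] using ge_of_tendsto' (hQ o).norm fun k => hg (φ k)
  obtain ⟨hground, hconv⟩ := hK.isGroundState_of_tendsto hp (fun k => hv (φ k))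
    (fun k => hvm (φ k))
    (by simpa only [hvE, Function.comp_def] using hmin.comp hshift.tendsto_atTop) hQ hQ0
  exact ⟨fun k => φ k + N, fun k => g (φ k), Q, hshift, hground, hconv⟩

end Concentration

section Lattice

variable {d : ℕ} {J : ℕ → ℝ}

/-- The couplings `J_{|n - m|}` of `ℤ^d` as edge weights, with zero diagonal. -/
def latticeKernel (d : ℕ) (J : ℕ → ℝ) (n m : Fin d → ℤ) : ℝ := JbarSummand d J (n - m)

lemma ite_mul_eq_latticeKernel_mul (n m : Fin d → ℤ) (c : ℝ) :
    (if m = n then 0 else J (latNorm (n - m)) * c) = latticeKernel d J n m * c := by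
  rw [latticeKernel, JbarSummand, ite_mul, zero_mul]
  exact if_congr (by rw [sub_eq_zero, eq_comm]) rfl rfl

lemma latticeKernel_vadd_vadd (g n m : Fin d → ℤ) :
    latticeKernel d J (g +ᵥ n) (g +ᵥ m) = latticeKernel d J n m := by
  rw [latticeKernel, vadd_eq_add, vadd_eq_add, add_sub_add_left_eq_sub, latticeKernel]

lemma latNorm_neg (m : Fin d → ℤ) : latNorm (-m) = latNorm m := by
  simp only [latNorm, Pi.neg_apply, Int.natAbs_neg]

lemma latticeKernel_symm (n m : Fin d → ℤ) : latticeKernel d J n m = latticeKernel d J m n := by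
  simp only [latticeKernel, JbarSummand, ← neg_sub m n, neg_eq_zero, latNorm_neg]

lemma isBoundedKernel_latticeKernel (hJ : ∀ k, 0 ≤ J k) (hsum : Summable (JbarSummand d J)) :
    IsBoundedKernel (latticeKernel d J) where
  nonneg n m := by
    rw [latticeKernel, JbarSummand]
    split_ifs
    exacts [le_rfl, hJ _]
  symm := latticeKernel_symm
  summable n := (Equiv.subLeft n).summable_iff.2 hsum
  exists_tsum_le := ⟨Jbar d J, fun n => ((Equiv.subLeft n).tsum_eq (JbarSummand d J)).le⟩

lemma memL2_iff {u : (Fin d → ℤ) → ℂ} : MemL2 d u ↔ Memℓp u 2 :=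
  memℓp_two_iff_summable_norm_sq.symm

lemma mass_eq_powSum (u : (Fin d → ℤ) → ℂ) : mass d u = powSum 2 u := by
  simp only [mass, powSum, Real.rpow_two]

lemma pairing_eq_dirichlet (hK : IsBoundedKernel (latticeKernel d J)) {u : (Fin d → ℤ) → ℂ}
    (hu : Memℓp u 2) : pairing d J u = dirichlet (latticeKernel d J) u := by
  have hgrad : Summable fun z : (Fin d → ℤ) × (Fin d → ℤ) =>
      latticeKernel d J z.1 z.2 * ‖u z.1 - u z.2‖ ^ 2 := by
    simpa only [hK.norm_grad_sq] using memℓp_two_iff_summable_norm_sq.1 (hK.memℓp_grad hu)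
  simp only [pairing, dirichlet, powSum, Real.rpow_two, hK.norm_grad_sq, hgrad.tsum_prod,
    ite_mul_eq_latticeKernel_mul]

lemma energy_eq_nlsEnergy (hK : IsBoundedKernel (latticeKernel d J)) (p : ℝ)
    {u : (Fin d → ℤ) → ℂ} (hu : Memℓp u 2) :
    energy d J p u = nlsEnergy (latticeKernel d J) p u := by
  rw [energy, pairing_eq_dirichlet hK hu, ppot, nlsEnergy, powSum]

lemma Ifun_eq_groundEnergy (hK : IsBoundedKernel (latticeKernel d J)) (p ν : ℝ) :
    Ifun d J p ν = groundEnergy ℂ (latticeKernel d J) p ν := by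
  refine congrArg sInf (Set.ext fun r => exists_congr fun u => ?_)
  rw [memL2_iff, mass_eq_powSum, ← and_assoc]
  exact and_congr_right fun hu => by rw [energy_eq_nlsEnergy hK p hu.1]

lemma LopR_eq_laplacian (q : (Fin d → ℤ) → ℝ) (n : Fin d → ℤ) :
    LopR d J q n = laplacian (latticeKernel d J) q n :=
  tsum_congr fun m => ite_mul_eq_latticeKernel_mul n m (q n - q m)

lemma memL2_ofReal_iff {q : (Fin d → ℤ) → ℝ} : MemL2 d (fun n => (q n : ℂ)) ↔ Memℓp q 2 :=
  memL2_iff.trans (memℓp_two_congr_norm fun n => Complex.norm_real (q n))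

lemma mass_ofReal (q : (Fin d → ℤ) → ℝ) : mass d (fun n => (q n : ℂ)) = powSum 2 q :=
  (mass_eq_powSum _).trans (powSum_congr_norm 2 fun n => Complex.norm_real (q n))

lemma energy_ofReal (hK : IsBoundedKernel (latticeKernel d J)) (p : ℝ) {q : (Fin d → ℤ) → ℝ}
    (hq : Memℓp q 2) :
    energy d J p (fun n => (q n : ℂ)) = nlsEnergy (latticeKernel d J) p q := by
  rw [energy_eq_nlsEnergy hK p (memL2_iff.1 (memL2_ofReal_iff.2 hq)),
    ← nlsEnergy_smul_unit (norm_one (α := ℂ)) q]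
  simp only [Complex.real_smul, mul_one]

lemma exp_neg_arg_mul_self {e : ℂ} (he : ‖e‖ = 1) :
    Complex.exp (Complex.I * ((-e.arg : ℝ) : ℂ)) * e = 1 := by
  have hpolar : Complex.exp (e.arg * Complex.I) = e := by
    simpa only [he, Complex.ofReal_one, one_mul] using Complex.norm_mul_exp_arg_mul_I e
  nth_rw 2 [← hpolar]
  rw [← Complex.exp_add, Complex.ofReal_neg, mul_neg, mul_comm, neg_add_cancel, Complex.exp_zero]

lemma norm_exp_mul_sub {e : ℂ} (he : ‖e‖ = 1) (w : ℂ) (r : ℝ) :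
    ‖Complex.exp (Complex.I * ((-e.arg : ℝ) : ℂ)) * w - r‖ = ‖w - r • e‖ := by
  have hphase := exp_neg_arg_mul_self he
  have hr : (r : ℂ) = Complex.exp (Complex.I * ((-e.arg : ℝ) : ℂ)) * (r • e) := by
    rw [mul_smul_comm, hphase, Complex.real_smul, mul_one]
  conv_lhs => rw [hr, ← mul_sub, norm_mul, Complex.norm_exp_I_mul_ofReal, one_mul]

lemma tsum_norm_exp_mul_shift_sub_sq {e : ℂ} (he : ‖e‖ = 1) (u : (Fin d → ℤ) → ℂ)
    (g : Fin d → ℤ) (q : (Fin d → ℤ) → ℝ) :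
    ∑' n, ‖Complex.exp (Complex.I * ((-e.arg : ℝ) : ℂ)) * u (n - -g) - (q n : ℂ)‖ ^ 2 =
      powSum 2 fun n => u (g +ᵥ n) - q n • e := by
  simp only [powSum, Real.rpow_two, norm_exp_mul_sub he, sub_neg_eq_add, vadd_eq_add, add_comm]

end Lattice

end DiscreteNLS

open DiscreteNLS in
theorem stmt2_general {V G E : Type*} [Countable V] [AddGroup G] [AddAction G V]
    [AddAction.IsPretransitive G V] [NormedAddCommGroup E] [InnerProductSpace ℝ E]
    [FiniteDimensional ℝ E] {K : V → V → ℝ} (hK : IsBoundedKernel K)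
    (hinv : ∀ (g : G) x y, K (g +ᵥ x) (g +ᵥ y) = K x y) {p ν : ℝ} (hp : 1 < p) (hν : 0 < ν)
    (hneg : groundEnergy E K p ν < 0) {u : ℕ → V → E} (hu : ∀ k, Memℓp (u k) 2)
    (hm : ∀ k, powSum 2 (u k) = ν)
    (hmin : Tendsto (fun k => nlsEnergy K p (u k)) atTop (𝓝 (groundEnergy E K p ν))) :
    ∃ nk : ℕ → ℕ, StrictMono nk ∧ ∃ (g : ℕ → G) (e : E) (q : V → ℝ), ‖e‖ = 1 ∧ (∀ x, 0 ≤ q x) ∧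
      Memℓp q 2 ∧ powSum 2 q = ν ∧ nlsEnergy K p q = groundEnergy E K p ν ∧
      Tendsto (fun k => powSum 2 fun x => u (nk k) (g k +ᵥ x) - q x • e) atTop (𝓝 0) ∧
      ∃ ω > 0, ∀ x, -ω * q x = laplacian K q x - q x ^ p := by
  obtain ⟨nk, g, Q, hnk, hQ, hlim⟩ :=
    exists_subseq_vadd_tendsto_isGroundState hK hinv hp hν hneg hu hm hmin
  obtain ⟨e, he, hQe⟩ := hQ.exists_eq_norm_smul hK hp hν
  have hprofile := hQ.norm_smul_const hK hp he
  refine ⟨nk, hnk, g, e, fun x => ‖Q x‖, he, fun x => norm_nonneg _, hQ.memℓp.norm,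
    (powSum_congr_norm 2 fun x => norm_norm _).trans hQ.mass_eq,
    (nlsEnergy_smul_unit he _).symm.trans hprofile.energy_eq, ?_,
    frequency K p ν _, frequency_pos hp hν (hprofile.energy_eq.trans_lt hneg),
    hprofile.neg_frequency_mul_eq hK hp hν he fun x => norm_nonneg _⟩
  rwa [hQe] at hlim

theorem stmt2 (d : ℕ) (hd : 1 ≤ d) (p : ℝ) (hp : 1 < p) (J : ℕ → ℝ)
    (hJpos : ∀ k, 0 ≤ J k) (hJbar : Summable (JbarSummand d J))
    (ν : ℝ) (hν : 0 < ν) (hIneg : Ifun d J p ν < 0)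
    (q : ℕ → (Fin d → ℤ) → ℂ)
    (hqL2 : ∀ k, MemL2 d (q k)) (hqmass : ∀ k, mass d (q k) = ν)
    (hmin : Tendsto (fun k => energy d J p (q k)) atTop (𝓝 (Ifun d J p ν))) :
    ∃ nk : ℕ → ℕ, StrictMono nk ∧
      ∃ (mk : ℕ → Fin d → ℤ) (φk : ℕ → ℝ) (qstar : (Fin d → ℤ) → ℝ),
        (∀ n, 0 ≤ qstar n) ∧ MemL2 d (fun n => (qstar n : ℂ)) ∧
        Tendsto
          (fun k => ∑' n : Fin d → ℤ,
            ‖Complex.exp (Complex.I * (φk k : ℂ)) * q (nk k) (n - mk k) - (qstar n : ℂ)‖ ^ 2)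
          atTop (𝓝 0) ∧
        mass d (fun n => (qstar n : ℂ)) = ν ∧
        energy d J p (fun n => (qstar n : ℂ)) = Ifun d J p ν ∧
        ∃ ω : ℝ, 0 < ω ∧ ∀ n, -ω * qstar n = LopR d J qstar n - qstar n ^ p := by
  have hK := DiscreteNLS.isBoundedKernel_latticeKernel hJpos hJbar
  have hL2 : ∀ k, Memℓp (q k) 2 := fun k => DiscreteNLS.memL2_iff.1 (hqL2 k)
  simp only [DiscreteNLS.Ifun_eq_groundEnergy hK, DiscreteNLS.energy_eq_nlsEnergy hK p (hL2 _),
    DiscreteNLS.mass_eq_powSum] at hIneg hqmass hmin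
  obtain ⟨nk, hnk, g, e, r, he, hr, hr_mem, hr_mass, hr_energy, hlim, ω, hω, hEL⟩ :=
    stmt2_general hK DiscreteNLS.latticeKernel_vadd_vadd hp hν hIneg hL2 hqmass hmin
  refine ⟨nk, hnk, fun k => -g k, fun _ => -e.arg, r, hr, DiscreteNLS.memL2_ofReal_iff.2 hr_mem,
    ?_, (DiscreteNLS.mass_ofReal r).trans hr_mass, ?_, ω, hω, fun n => ?_⟩
  · simpa only [DiscreteNLS.tsum_norm_exp_mul_shift_sub_sq he] using hlim
  · rw [DiscreteNLS.energy_ofReal hK p hr_mem, hr_energy, DiscreteNLS.Ifun_eq_groundEnergy hK]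
  · rw [DiscreteNLS.LopR_eq_laplacian, hEL n]
end
end

section
/- Assume J̄ < ∞ and that J is of order α ∈ (0,∞). Let q ∈ ℓ²(Z^d) have nonnegative entries and satisfy −ω q_n = (Lq)_n − (q_n)^p for all n ∈ Z^d, for some ω > 0. Then there exists a constant C > 0 such that q_n ≤ C (1 + |n|)^{−(d+α)} for every n ∈ Z^d. -/
open scoped BigOperators
open Filter Topology

noncomputable section

open Asymptotics

/-! Write the equation as `L q + (ω - q ^ (p - 1)) q = 0`. Since `q → 0`, it gives
`L q ≤ -(ω / 2) q` outside a finite set. For `R` large, `w m = (R + |m|) ^ (-s)` with `s = d + α`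
satisfies `L w ≥ -(ω / 2) w`: with a small `δ`, jumps from `n` shorter than `δ (R + |n|)` increase
`w` at most by a factor close to one, while the kernel of longer jumps is `O(w n)` and `∑ w` tends
to zero as `R → ∞`. Choosing `D` with `q ≤ D w` on the finite set, `q - D w` cannot have a positive
maximum, because `L` is nonnegative at a maximum. Hence `q ≤ D w` everywhere. -/

section KernelLaplacian

variable {G : Type*} [AddGroup G] {j u v : G → ℝ} {n : G}

/-- The nonlocal operator `(L_j u)_n = ∑_m j_{n-m} (u_n - u_m)` with kernel `j` on an additive
group. It extends the lattice operator `LopR` to arbitrary kernels. The value `j 0` is immaterial,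
so the sum includes the diagonal term. -/
def kernelLaplacian (j u : G → ℝ) (n : G) : ℝ := ∑' m, j (n - m) * (u n - u m)

theorem kernelLaplacian_nonneg_of_forall_le (hj0 : ∀ m, 0 ≤ j m) (hmax : ∀ m, u m ≤ u n) :
    0 ≤ kernelLaplacian j u n :=
  tsum_nonneg fun m => mul_nonneg (hj0 _) (sub_nonneg.2 (hmax m))

theorem summable_kernel_mul_sub {c : ℝ} (hj : Summable j) (hu : Tendsto u cofinite (𝓝 c)) (n : G) :
    Summable fun m => j (n - m) * (u n - u m) :=
  ((Equiv.subLeft n).summable_iff.2 hj).norm.mul_tendsto_const (hu.const_sub (u n))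

theorem kernelLaplacian_sub_const_mul {b c : ℝ} (hj : Summable j) (hu : Tendsto u cofinite (𝓝 b))
    (hv : Tendsto v cofinite (𝓝 c)) (D : ℝ) (n : G) :
    kernelLaplacian j (fun m => u m - D * v m) n =
      kernelLaplacian j u n - D * kernelLaplacian j v n := by
  unfold kernelLaplacian
  rw [← tsum_mul_left, ← (summable_kernel_mul_sub hj hu n).tsum_sub
    ((summable_kernel_mul_sub hj hv n).mul_left D)]
  exact tsum_congr fun m => by ring

theorem exists_forall_le_of_tendsto_cofinite_zero {X : Type*} {f : X → ℝ}
    (hf : Tendsto f cofinite (𝓝 0)) {x : X} (hx : 0 < f x) : ∃ a, ∀ y, f y ≤ f a := by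
  have hfin : {y | f x ≤ f y}.Finite := by
    simpa only [eventually_cofinite, not_lt] using hf.eventually_lt_const hx
  obtain ⟨a, hxa, hmax⟩ := Set.exists_max_image _ f hfin ⟨x, le_refl (f x)⟩
  exact ⟨a, fun y => (le_total (f x) (f y)).elim (hmax y) fun hyx => hyx.trans hxa⟩

theorem nonpos_of_kernelLaplacian_neg (hj0 : ∀ m, 0 ≤ j m) (hu : Tendsto u cofinite (𝓝 0))
    (hneg : ∀ n, 0 < u n → kernelLaplacian j u n < 0) (n : G) : u n ≤ 0 := by
  by_contra! hn
  obtain ⟨a, hmax⟩ := exists_forall_le_of_tendsto_cofinite_zero hu hn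
  exact (kernelLaplacian_nonneg_of_forall_le hj0 hmax).not_gt (hneg a (hn.trans_le (hmax n)))

theorem exists_pos_forall_le_mul_of_kernelLaplacian_le {w : G → ℝ} {ε : ℝ} (hj0 : ∀ m, 0 ≤ j m)
    (hj : Summable j) (hε : 0 < ε) (hw0 : ∀ n, 0 < w n) (hw : Tendsto w cofinite (𝓝 0))
    (hsuper : ∀ n, -ε * w n ≤ kernelLaplacian j w n) (hu : Tendsto u cofinite (𝓝 0))
    (hsub : ∀ᶠ n in cofinite, kernelLaplacian j u n ≤ -ε * u n) :
    ∃ D > 0, ∀ n, u n ≤ D * w n := by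
  obtain ⟨D, hD, hDu⟩ : ∃ D > 0, ∀ n, ¬kernelLaplacian j u n ≤ -ε * u n → u n ≤ D * w n := by
    obtain ⟨C, hC⟩ := ((eventually_cofinite.1 hsub).image fun n => u n / w n).bddAbove
    refine ⟨max C 1, by positivity, fun n hn => (div_le_iff₀ (hw0 n)).1 ?_⟩
    exact (hC ⟨n, hn, rfl⟩).trans (le_max_left C 1)
  refine ⟨D, hD, fun n => sub_nonpos.1 ?_⟩
  refine nonpos_of_kernelLaplacian_neg (u := fun n => u n - D * w n) hj0 ?_ (fun m hm => ?_) n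
  · simpa only [mul_zero, sub_zero] using hu.sub (hw.const_mul D)
  · have hsub_m : kernelLaplacian j u m ≤ -ε * u m :=
      not_not.1 fun hcon => (hDu m hcon).not_gt (sub_pos.1 hm)
    calc kernelLaplacian j (fun n => u n - D * w n) m
        = kernelLaplacian j u m - D * kernelLaplacian j w m :=
          kernelLaplacian_sub_const_mul hj hu hw D m
      _ ≤ -ε * u m - D * (-ε * w m) := by gcongr; exact hsuper m
      _ = -(ε * (u m - D * w m)) := by ring
      _ < 0 := neg_neg_of_pos (mul_pos hε hm)

end KernelLaplacian

section PolyWeight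

variable {E : Type*} [NormedAddGroup E] {s R δ ε B : ℝ} {j u : E → ℝ}

/-- The polynomially decaying weight `m ↦ (R + |m|) ^ (-s)`, used as a barrier for
`kernelLaplacian`. The shift `R` makes its sum small. -/
def polyWeight (s R : ℝ) (m : E) : ℝ := (R + ‖m‖) ^ (-s)

theorem polyWeight_pos (hR : 0 < R) (m : E) : 0 < polyWeight s R m :=
  Real.rpow_pos_of_pos (by positivity) _

theorem polyWeight_le_polyWeight_of_le {R' : ℝ} (hs : 0 ≤ s) (hR : 0 < R) (hRR' : R ≤ R') (m : E) :
    polyWeight s R' m ≤ polyWeight s R m :=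
  Real.rpow_le_rpow_of_nonpos (by positivity) (by gcongr) (neg_nonpos.2 hs)

theorem summable_polyWeight (hs : 0 ≤ s) (hR : 0 < R)
    (hsum : Summable fun m : E => ‖m‖ ^ (-s)) : Summable fun m : E => polyWeight s R m := by
  refine .of_norm_bounded_eventually hsum ?_
  filter_upwards [(Set.finite_singleton (0 : E)).compl_mem_cofinite] with m hm
  rw [Real.norm_of_nonneg (polyWeight_pos hR m).le]
  exact Real.rpow_le_rpow_of_nonpos (norm_pos_iff.2 hm) (by linarith) (neg_nonpos.2 hs)

theorem tendsto_tsum_polyWeight_atTop (hs : 0 < s) (hsum : Summable fun m : E => ‖m‖ ^ (-s)) :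
    Tendsto (fun R => ∑' m : E, polyWeight s R m) atTop (𝓝 0) := by
  rw [← tsum_zero (β := E)]
  refine tendsto_tsum_of_dominated_convergence (summable_polyWeight hs.le one_pos hsum)
    (fun m => ?_) ?_
  · exact (tendsto_rpow_neg_atTop hs).comp (tendsto_atTop_add_const_right _ _ tendsto_id)
  · filter_upwards [eventually_ge_atTop 1] with R hR m
    rw [Real.norm_of_nonneg (polyWeight_pos (by positivity) m).le]
    exact polyWeight_le_polyWeight_of_le hs.le one_pos hR m

theorem polyWeight_le_of_norm_sub_le (hs : 0 ≤ s) (hR : 0 < R) (hδ : δ < 1) {n m : E}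
    (hnear : ‖n - m‖ ≤ δ * (R + ‖n‖)) :
    polyWeight s R m ≤ (1 - δ) ^ (-s) * polyWeight s R n := by
  have hn : 0 < R + ‖n‖ := by positivity
  have htri : ‖n‖ ≤ ‖n - m‖ + ‖m‖ := by simpa only [sub_add_cancel] using norm_add_le (n - m) m
  unfold polyWeight
  rw [← Real.mul_rpow (sub_nonneg.2 hδ.le) hn.le]
  exact Real.rpow_le_rpow_of_nonpos (mul_pos (sub_pos.2 hδ) hn) (by linarith) (neg_nonpos.2 hs)

theorem kernel_le_of_lt_norm (hs : 0 ≤ s) (hB : 0 ≤ B)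
    (hjB : ∀ m, m ≠ 0 → j m ≤ B * ‖m‖ ^ (-s)) (hR : 0 < R) (hδ : 0 < δ) {n k : E}
    (hfar : δ * (R + ‖n‖) < ‖k‖) : j k ≤ B * δ ^ (-s) * polyWeight s R n := by
  have hr : 0 < δ * (R + ‖n‖) := by positivity
  calc j k ≤ B * ‖k‖ ^ (-s) := hjB k (norm_pos_iff.1 (hr.trans hfar))
    _ ≤ B * (δ * (R + ‖n‖)) ^ (-s) :=
      mul_le_mul_of_nonneg_left (Real.rpow_le_rpow_of_nonpos hr hfar.le (neg_nonpos.2 hs)) hB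
    _ = B * δ ^ (-s) * polyWeight s R n := by
      rw [Real.mul_rpow hδ.le (by positivity), ← mul_assoc, polyWeight]

theorem kernel_mul_polyWeight_sub_le (hs : 0 ≤ s) (hj0 : ∀ m, 0 ≤ j m) (hB : 0 ≤ B)
    (hjB : ∀ m, m ≠ 0 → j m ≤ B * ‖m‖ ^ (-s)) (hR : 0 < R) (hδ0 : 0 < δ) (hδ1 : δ < 1) (n m : E) :
    j (n - m) * (polyWeight s R m - polyWeight s R n) ≤
      (((1 - δ) ^ (-s) - 1) * j (n - m) + B * δ ^ (-s) * polyWeight s R m) * polyWeight s R n := by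
  have hwn : 0 < polyWeight s R n := polyWeight_pos hR n
  have hwm : 0 < polyWeight s R m := polyWeight_pos hR m
  rcases le_or_gt ‖n - m‖ (δ * (R + ‖n‖)) with hnear | hfar
  · calc j (n - m) * (polyWeight s R m - polyWeight s R n)
        ≤ j (n - m) * ((1 - δ) ^ (-s) * polyWeight s R n - polyWeight s R n) := by
          gcongr
          · exact hj0 _
          · exact polyWeight_le_of_norm_sub_le hs hR hδ1 hnear
      _ = ((1 - δ) ^ (-s) - 1) * j (n - m) * polyWeight s R n := by ring
      _ ≤ _ := by gcongr; exact le_add_of_nonneg_right (by positivity)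
  · have hfactor : 0 ≤ (1 - δ) ^ (-s) - 1 :=
      sub_nonneg.2 (Real.one_le_rpow_of_pos_of_le_one_of_nonpos (sub_pos.2 hδ1)
        (sub_le_self 1 hδ0.le) (neg_nonpos.2 hs))
    calc j (n - m) * (polyWeight s R m - polyWeight s R n)
        ≤ j (n - m) * polyWeight s R m :=
          mul_le_mul_of_nonneg_left (sub_le_self _ hwn.le) (hj0 _)
      _ ≤ B * δ ^ (-s) * polyWeight s R n * polyWeight s R m := by
          gcongr; exact kernel_le_of_lt_norm hs hB hjB hR hδ0 hfar
      _ = B * δ ^ (-s) * polyWeight s R m * polyWeight s R n := by ring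
      _ ≤ _ := by gcongr; exact le_add_of_nonneg_left (mul_nonneg hfactor (hj0 _))

theorem neg_mul_polyWeight_le_kernelLaplacian (hs : 0 ≤ s)
    (hsum : Summable fun m : E => ‖m‖ ^ (-s)) (hj0 : ∀ m, 0 ≤ j m) (hj : Summable j) (hB : 0 ≤ B)
    (hjB : ∀ m, m ≠ 0 → j m ≤ B * ‖m‖ ^ (-s)) (hR : 0 < R) (hδ0 : 0 < δ) (hδ1 : δ < 1) (n : E) :
    -(((1 - δ) ^ (-s) - 1) * ∑' m, j m + B * δ ^ (-s) * ∑' m : E, polyWeight s R m) *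
      polyWeight s R n ≤ kernelLaplacian j (polyWeight s R) n := by
  have hw := summable_polyWeight hs hR hsum
  have hjn : Summable fun m => ((1 - δ) ^ (-s) - 1) * j (n - m) :=
    ((Equiv.subLeft n).summable_iff.2 hj).mul_left _
  have hjn_tsum : ∑' m, j (n - m) = ∑' m, j m := (Equiv.subLeft n).tsum_eq j
  have hbound := (hjn.add (hw.mul_left (B * δ ^ (-s)))).mul_right (polyWeight s R n)
  have hLw := summable_kernel_mul_sub hj hw.tendsto_cofinite_zero n
  rw [neg_mul, neg_le, kernelLaplacian, ← tsum_neg]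
  calc ∑' m, -(j (n - m) * (polyWeight s R n - polyWeight s R m))
      ≤ ∑' m, (((1 - δ) ^ (-s) - 1) * j (n - m) + B * δ ^ (-s) * polyWeight s R m) *
          polyWeight s R n := by
        refine hLw.neg.tsum_le_tsum (fun m => ?_) hbound
        rw [← mul_neg, neg_sub]
        exact kernel_mul_polyWeight_sub_le hs hj0 hB hjB hR hδ0 hδ1 n m
    _ = _ := by
        rw [tsum_mul_right, hjn.tsum_add (hw.mul_left _), tsum_mul_left, tsum_mul_left, hjn_tsum]

theorem exists_one_sub_rpow_sub_one_mul_lt (s S : ℝ) (hε : 0 < ε) :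
    ∃ δ : ℝ, 0 < δ ∧ δ < 1 ∧ ((1 - δ) ^ (-s) - 1) * S < ε := by
  have hcont : ContinuousAt (fun δ : ℝ => ((1 - δ) ^ (-s) - 1) * S) 0 :=
    (((continuousAt_const.sub continuousAt_id).rpow_const (.inl (by simp))).sub
      continuousAt_const).mul continuousAt_const
  have hlt : ∀ᶠ δ in 𝓝 (0 : ℝ), ((1 - δ) ^ (-s) - 1) * S < ε :=
    hcont.eventually_lt continuousAt_const (by simpa using hε)
  obtain ⟨δ, ⟨hδε, hδ1⟩, hδ0⟩ := (((hlt.and (eventually_lt_nhds one_pos)).filter_mono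
    nhdsWithin_le_nhds).and (self_mem_nhdsWithin (s := Set.Ioi 0))).exists
  exact ⟨δ, hδ0, hδ1, hδε⟩

theorem exists_polyWeight_le_kernelLaplacian (hs : 0 < s)
    (hsum : Summable fun m : E => ‖m‖ ^ (-s)) (hj0 : ∀ m, 0 ≤ j m)
    (hj : j =O[cofinite] fun m => ‖m‖ ^ (-s)) (hε : 0 < ε) :
    ∃ R ≥ 1, ∀ n, -ε * polyWeight s R n ≤ kernelLaplacian j (polyWeight s R) n := by
  obtain ⟨B, hB, hjB⟩ := bound_of_isBigO_cofinite hj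
  have hjB' (m : E) (hm : m ≠ 0) : j m ≤ B * ‖m‖ ^ (-s) := by
    have hpos : 0 < ‖m‖ ^ (-s) := Real.rpow_pos_of_pos (norm_pos_iff.2 hm) _
    simpa only [Real.norm_of_nonneg (hj0 m), Real.norm_of_nonneg hpos.le] using hjB hpos.ne'
  obtain ⟨δ, hδ0, hδ1, hnear⟩ := exists_one_sub_rpow_sub_one_mul_lt s (∑' m, j m) (half_pos hε)
  have hlim : Tendsto (fun R => B * δ ^ (-s) * ∑' m : E, polyWeight s R m) atTop (𝓝 0) := by
    simpa only [mul_zero] using (tendsto_tsum_polyWeight_atTop hs hsum).const_mul (B * δ ^ (-s))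
  obtain ⟨R, hfar, hR⟩ :=
    ((hlim.eventually_lt_const (half_pos hε)).and (eventually_ge_atTop 1)).exists
  have hR0 : 0 < R := one_pos.trans_le hR
  refine ⟨R, hR, fun n => le_trans ?_ (neg_mul_polyWeight_le_kernelLaplacian hs.le hsum hj0
    (summable_of_isBigO hsum hj) hB.le hjB' hR0 hδ0 hδ1 n)⟩
  exact mul_le_mul_of_nonneg_right (by linarith) (polyWeight_pos hR0 n).le

theorem exists_le_mul_polyWeight_of_kernelLaplacian_le (hs : 0 < s)
    (hsum : Summable fun m : E => ‖m‖ ^ (-s)) (hj0 : ∀ m, 0 ≤ j m)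
    (hj : j =O[cofinite] fun m => ‖m‖ ^ (-s)) (hu : Tendsto u cofinite (𝓝 0)) (hε : 0 < ε)
    (hsub : ∀ᶠ n in cofinite, kernelLaplacian j u n ≤ -ε * u n) :
    ∃ C > 0, ∀ n, u n ≤ C * polyWeight s 1 n := by
  obtain ⟨R, hR, hsuper⟩ := exists_polyWeight_le_kernelLaplacian hs hsum hj0 hj hε
  have hR0 : 0 < R := one_pos.trans_le hR
  obtain ⟨C, hC, hle⟩ := exists_pos_forall_le_mul_of_kernelLaplacian_le hj0
    (summable_of_isBigO hsum hj) hε (polyWeight_pos hR0)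
    (summable_polyWeight hs.le hR0 hsum).tendsto_cofinite_zero hsuper hu hsub
  refine ⟨C, hC, fun n => (hle n).trans ?_⟩
  exact mul_le_mul_of_nonneg_left (polyWeight_le_polyWeight_of_le hs.le one_pos hR n) hC.le

end PolyWeight

section RealPowers

theorem tendsto_zero_of_summable_sq {X : Type*} {f : X → ℝ} (hf : Summable fun x => f x ^ 2) :
    Tendsto f cofinite (𝓝 0) :=
  (tendsto_zero_iff_abs_tendsto_zero f).2 <| by
    simpa only [Function.comp_def, Real.sqrt_sq_eq_abs, Real.sqrt_zero] using
      hf.tendsto_cofinite_zero.sqrt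

theorem eventually_rpow_le_mul {X : Type*} {l : Filter X} {f : X → ℝ} {p ε : ℝ} (hp : 1 < p)
    (hε : 0 < ε) (hf0 : ∀ x, 0 ≤ f x) (hf : Tendsto f l (𝓝 0)) :
    ∀ᶠ x in l, f x ^ p ≤ ε * f x := by
  have hlim : Tendsto (fun x => f x ^ (p - 1)) l (𝓝 0) := by
    simpa only [Real.zero_rpow (sub_pos.2 hp).ne'] using
      hf.rpow_const (.inr (sub_nonneg.2 hp.le))
  filter_upwards [hlim.eventually_le_const hε] with x hx
  calc f x ^ p = f x ^ (p - 1) * f x := by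
        rw [← Real.rpow_add_one' (hf0 x) (by linarith), sub_add_cancel]
    _ ≤ ε * f x := mul_le_mul_of_nonneg_right hx (hf0 x)

theorem isBigO_rpow_neg_of_tendsto_rpow_mul {f : ℕ → ℝ} {s A : ℝ}
    (hf : Tendsto (fun k : ℕ => (k : ℝ) ^ s * f k) atTop (𝓝 A)) :
    f =O[atTop] fun k : ℕ => (k : ℝ) ^ (-s) := by
  refine isBigO_of_div_tendsto_nhds ?_ A (hf.congr fun k => ?_)
  · filter_upwards [eventually_gt_atTop 0] with k hk hzero
    exact absurd hzero (Real.rpow_pos_of_pos (Nat.cast_pos.2 hk) _).ne'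
  · rw [Pi.div_apply, Real.rpow_neg k.cast_nonneg, div_inv_eq_mul, mul_comm]

end RealPowers

section Lattice

variable {d : ℕ} {J : ℕ → ℝ}

theorem natCast_latNorm (m : Fin d → ℤ) : (latNorm m : ℝ) = ‖m‖ := by
  rw [latNorm, Pi.norm_def, ← NNReal.coe_natCast, NNReal.coe_inj,
    Finset.apply_sup_eq_sup_comp_of_linearOrder _ Nat.mono_cast Nat.cast_zero]
  simp only [Function.comp_def, NNReal.natCast_natAbs]

theorem tendsto_latNorm_cofinite : Tendsto (latNorm (d := d)) cofinite atTop := by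
  rw [← tendsto_natCast_atTop_iff (R := ℝ), ← cocompact_eq_cofinite]
  simpa only [natCast_latNorm] using tendsto_norm_cocompact_atTop (E := Fin d → ℤ)

theorem summable_norm_rpow_int_pi {ι : Type*} [Fintype ι] {r : ℝ} (hr : r < -Fintype.card ι) :
    Summable fun m : ι → ℤ => ‖m‖ ^ r := by
  let L : Submodule ℤ (ι → ℝ) := Submodule.span ℤ (Set.range (Pi.basisFun ℝ ι))
  let toL (m : ι → ℤ) : L :=
    ⟨fun i => m i, by simp [L, (Pi.basisFun ℝ ι).mem_span_iff_repr_mem ℤ]⟩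
  have toL_injective : Function.Injective toL := fun m m' h =>
    funext fun i => Int.cast_injective (congrFun (congrArg Subtype.val h) i)
  have norm_toL (m : ι → ℤ) : ‖toL m‖ = ‖m‖ := rfl
  have finrank_L : Module.finrank ℤ L = Fintype.card ι := by
    rw [ZLattice.rank ℝ, Module.finrank_fintype_fun_eq_card]
  simpa only [Function.comp_def, norm_toL] using
    (ZLattice.summable_norm_rpow L r (by rwa [finrank_L])).comp_injective toL_injective

theorem JbarSummand_nonneg (hJ0 : ∀ k, 0 ≤ J k) (m : Fin d → ℤ) : 0 ≤ JbarSummand d J m := by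
  unfold JbarSummand
  split_ifs
  exacts [le_rfl, hJ0 _]

theorem JbarSummand_isBigO {s : ℝ} (hJ : J =O[atTop] fun k : ℕ => (k : ℝ) ^ (-s)) :
    JbarSummand d J =O[cofinite] fun m => ‖m‖ ^ (-s) := by
  have hcomp : (fun m : Fin d → ℤ => J (latNorm m)) =O[cofinite] fun m => ‖m‖ ^ (-s) := by
    simpa only [Function.comp_def, natCast_latNorm] using hJ.comp_tendsto tendsto_latNorm_cofinite
  refine hcomp.congr' ?_ .rfl
  filter_upwards [(Set.finite_singleton (0 : Fin d → ℤ)).compl_mem_cofinite] with m hm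
  exact (if_neg hm).symm

theorem LopR_eq_kernelLaplacian (q : (Fin d → ℤ) → ℝ) (n : Fin d → ℤ) :
    LopR d J q n = kernelLaplacian (JbarSummand d J) q n := by
  refine tsum_congr fun m => ?_
  rcases eq_or_ne m n with rfl | hmn
  · rw [if_pos rfl, sub_self (q m), mul_zero]
  · rw [if_neg hmn, JbarSummand, if_neg (sub_ne_zero.2 hmn.symm)]

end Lattice

theorem stmt3_general {d : ℕ} {p : ℝ} (hp : 1 < p) {J : ℕ → ℝ} (hJ0 : ∀ k, 0 ≤ J k) {α : ℝ}
    (hα : 0 < α) (hJ : J =O[atTop] fun k : ℕ => (k : ℝ) ^ (-((d : ℝ) + α)))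
    {q : (Fin d → ℤ) → ℝ} (hq0 : ∀ n, 0 ≤ q n) (hq : Tendsto q cofinite (𝓝 0)) {ω : ℝ}
    (hω : 0 < ω) (hsub : ∀ᶠ n in cofinite, LopR d J q n - q n ^ p ≤ -ω * q n) :
    ∃ C : ℝ, 0 < C ∧ ∀ n : Fin d → ℤ,
      q n ≤ C * (1 + (latNorm n : ℝ)) ^ (-((d : ℝ) + α)) := by
  have hsum : Summable fun m : Fin d → ℤ => ‖m‖ ^ (-((d : ℝ) + α)) :=
    summable_norm_rpow_int_pi (by rw [Fintype.card_fin]; linarith)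
  have hLq : ∀ᶠ n in cofinite, kernelLaplacian (JbarSummand d J) q n ≤ -(ω / 2) * q n := by
    filter_upwards [hsub, eventually_rpow_le_mul hp (half_pos hω) hq0 hq] with n hn hpow
    rw [← LopR_eq_kernelLaplacian]
    linarith
  simpa only [natCast_latNorm, polyWeight] using
    exists_le_mul_polyWeight_of_kernelLaplacian_le (by positivity) hsum (JbarSummand_nonneg hJ0)
      (JbarSummand_isBigO hJ) hq (half_pos hω) hLq

theorem stmt3 (d : ℕ) (hd : 1 ≤ d) (p : ℝ) (hp : 1 < p) (J : ℕ → ℝ)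
    (hJpos : ∀ k, 0 ≤ J k) (hJbar : Summable (JbarSummand d J))
    (α : ℝ) (hα : 0 < α)
    (horder : ∃ A : ℝ, 0 < A ∧
      Tendsto (fun k : ℕ => (k : ℝ) ^ ((d : ℝ) + α) * J k) atTop (𝓝 A))
    (q : (Fin d → ℤ) → ℝ) (hqpos : ∀ n, 0 ≤ q n)
    (hqL2 : Summable fun n : Fin d → ℤ => q n ^ 2)
    (ω : ℝ) (hω : 0 < ω)
    (heig : ∀ n, -ω * q n = LopR d J q n - q n ^ p) :
    ∃ C : ℝ, 0 < C ∧ ∀ n : Fin d → ℤ,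
      q n ≤ C * (1 + (latNorm n : ℝ)) ^ (-((d : ℝ) + α)) := by
  obtain ⟨A, -, hA⟩ := horder
  exact stmt3_general hp hJpos hα (isBigO_rpow_neg_of_tendsto_rpow_mul hA) hqpos
    (tendsto_zero_of_summable_sq hqL2) hω (.of_forall fun n => (heig n).ge)
end
end

section
/- Assume J̄ < ∞, J_1 > 0, and that J is of order α ∈ (0,∞). Define δ(ξ) = |ξ|^α if α ∈ (0,2); δ(ξ) = |ξ|² (1 + |log|ξ||) for ξ ≠ 0 with δ(0) = 0 if α = 2; and δ(ξ) = |ξ|² if α ∈ (2,∞). Then there exist constants c, C > 0 such that c δ(ξ) ≤ σ(ξ) ≤ C δ(ξ) for all ξ ∈ [−π,π]^d. If instead J is of order ∞, the same two-sided bound holds with δ(ξ) = |ξ|². -/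
open scoped BigOperators
open Filter Topology

noncomputable section

open scoped ENNReal
/-- `J` is of order `α ∈ (0,∞]`: for finite `α`, `k^{d+α} J_k` tends to a finite positive
limit; for `α = ∞`, `k^{d+β} J_k → 0` for every `β > 0`. -/
def JOrder (d : ℕ) (J : ℕ → ℝ) (α : ℝ≥0∞) : Prop :=
  if α = ⊤ then
    ∀ β : ℝ, 0 < β → Tendsto (fun k : ℕ => (k : ℝ) ^ ((d : ℝ) + β) * J k) atTop (𝓝 0)
  else
    ∃ A : ℝ, 0 < A ∧ Tendsto (fun k : ℕ => (k : ℝ) ^ ((d : ℝ) + α.toReal) * J k) atTop (𝓝 A)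

/-- `α′ = α/2` for `α ∈ (0,2)` and `α′ = 1` for `α ∈ [2,∞]`. -/
def alphaPrime (α : ℝ≥0∞) : ℝ := if α < 2 then α.toReal / 2 else 1

/-- The comparison function `δ(ξ)` (as a function of `r = |ξ|`): `r^α` for `α ∈ (0,2)`,
`r²(1 + |log r|)` for `α = 2` (with value `0` at `r = 0`), and `r²` for `α ∈ (2,∞]`. -/
def deltaFun (α : ℝ≥0∞) (r : ℝ) : ℝ :=
  if α < 2 then r ^ α.toReal
  else if α = 2 then r ^ 2 * (1 + |Real.log r|)
  else r ^ 2

/-- The symbol `σ(ξ) = 2 Σ_{m ≠ 0} J_{|m|} sin²(m·ξ/2)`. -/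
def symbol (d : ℕ) (J : ℕ → ℝ) (ξ : Fin d → ℝ) : ℝ :=
  2 * ∑' m : Fin d → ℤ,
    if m = 0 then 0
    else J (latNorm m) * Real.sin ((∑ i, (m i : ℝ) * ξ i) / 2) ^ 2

/-!
Split `ℤ^d` into the shells `|m| = k`. Such a shell has about `k^(d-1)` points, and it is invariant
under sign changes and permutations of the coordinates, so the average of `(m · ξ)²` over it is
about `k² |ξ|²`. Hence the shell sum of `sin²(m · ξ / 2)` is at most of order
`k^(d-1) min(1, k² |ξ|²)`, and at least of that order as long as `k |ξ|` stays small. This compares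
`σ(ξ)` with `Σ_k k^(-1-α) min(1, k² |ξ|²)`. Cut the latter at `k ≈ 1 / |ξ|`: the tail is of order
`|ξ|^α` and the head is `|ξ|² Σ_{k ≤ 1/|ξ|} k^(1-α)`, where the sum grows like a power, grows like a
logarithm or stays bounded according to whether `α < 2`, `α = 2` or `α > 2`. In the lower bound,
the finitely many `k` at which `J_k` may be too small cost only a multiple of `|ξ|²`, which the
shell `k = 1` supplies since `J_1 > 0`.
-/

section Shells

open Finset Real

variable {d : ℕ}

lemma latNorm_le_iff {m : Fin d → ℤ} {n : ℕ} : latNorm m ≤ n ↔ ∀ i, (m i).natAbs ≤ n := by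
  simp only [latNorm, Finset.sup_le_iff, mem_univ, forall_const]

lemma natAbs_le_latNorm (m : Fin d → ℤ) (i : Fin d) : (m i).natAbs ≤ latNorm m :=
  latNorm_le_iff.mp le_rfl i

lemma mem_Icc_neg_natCast {m : Fin d → ℤ} {n : ℕ} :
    m ∈ Icc (-(n : Fin d → ℤ)) n ↔ latNorm m ≤ n := by
  simp only [mem_Icc, Pi.le_def, ← forall_and, latNorm_le_iff, Pi.neg_apply, Pi.natCast_apply]
  exact forall_congr' fun i => by omega

/-- The shell `|m| = k` of the lattice `ℤ^d`. -/
abbrev latShell (d k : ℕ) : Finset (Fin d → ℤ) := box k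

lemma mem_latShell {m : Fin d → ℤ} : ∀ {k : ℕ}, m ∈ latShell d k ↔ latNorm m = k
  | 0 => by
    rw [latShell, box_zero, mem_singleton, ← Nat.le_zero, latNorm_le_iff]
    simp only [nonpos_iff_eq_zero, Int.natAbs_eq_zero, funext_iff, Pi.zero_apply]
  | k + 1 => by
    rw [latShell, box_succ_eq_sdiff, Finset.mem_sdiff, mem_Icc_neg_natCast, mem_Icc_neg_natCast]
    omega

lemma card_Icc_neg_natCast (n : ℕ) : #(Icc (-(n : Fin d → ℤ)) n) = (2 * n + 1) ^ d := by
  rw [Pi.card_Icc]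
  simp only [Pi.neg_apply, Pi.natCast_apply, Int.card_Icc, prod_const, card_univ, Fintype.card_fin]
  congr 1
  omega

lemma card_latShell {k : ℕ} (hk : k ≠ 0) :
    (#(latShell d k) : ℝ) = (2 * k + 1) ^ d - (2 * k - 1) ^ d := by
  obtain ⟨n, rfl⟩ := Nat.exists_eq_succ_of_ne_zero hk
  have h := congrArg card (box_succ_disjUnion (α := Fin d → ℤ) n)
  rw [card_disjUnion, card_Icc_neg_natCast, card_Icc_neg_natCast] at h
  rw [eq_sub_iff_add_eq]
  convert congrArg (Nat.cast (R := ℝ)) h using 1 <;> push_cast <;> ring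

lemma card_latShell_le {k : ℕ} (hk : k ≠ 0) :
    (#(latShell d k) : ℝ) ≤ 2 * 3 ^ (d - 1) * (d * (k : ℝ) ^ (d - 1)) := by
  have hk1 : (1 : ℝ) ≤ k := mod_cast Nat.one_le_iff_ne_zero.mpr hk
  have hmax : max |2 * (k : ℝ) + 1| |2 * (k : ℝ) - 1| ≤ 3 * k :=
    max_le (abs_le.mpr ⟨by linarith, by linarith⟩) (abs_le.mpr ⟨by linarith, by linarith⟩)
  calc (#(latShell d k) : ℝ) ≤ |(2 * (k : ℝ) + 1) ^ d - (2 * k - 1) ^ d| := by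
        rw [card_latShell hk]; exact le_abs_self _
    _ ≤ |2 * (k : ℝ) + 1 - (2 * k - 1)| * d * max |2 * (k : ℝ) + 1| |2 * (k : ℝ) - 1| ^ (d - 1) :=
        abs_pow_sub_pow_le ..
    _ ≤ |2 * (k : ℝ) + 1 - (2 * k - 1)| * d * (3 * k) ^ (d - 1) := by gcongr
    _ = 2 * 3 ^ (d - 1) * (d * (k : ℝ) ^ (d - 1)) := by
        rw [show 2 * (k : ℝ) + 1 - (2 * k - 1) = 2 by ring, abs_two, mul_pow]; ring

lemma le_card_latShell {k : ℕ} (hk : k ≠ 0) :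
    2 * (d * (k : ℝ) ^ (d - 1)) ≤ #(latShell d k) := by
  have hk1 : (1 : ℝ) ≤ k := mod_cast Nat.one_le_iff_ne_zero.mpr hk
  have bernoulli := pow_add_mul_le_add_pow (a := 2 * (k : ℝ) - 1) (b := 2)
    (by linarith) (by linarith) d
  rw [show 2 * (k : ℝ) - 1 + 2 = 2 * k + 1 by ring] at bernoulli
  have hpow : (k : ℝ) ^ (d - 1) ≤ (2 * k - 1) ^ (d - 1) := by gcongr; linarith
  rw [card_latShell hk]
  nlinarith [mul_le_mul_of_nonneg_left hpow d.cast_nonneg]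

lemma sum_latShell_comp_equiv {M : Type*} [AddCommMonoid M] (e : (Fin d → ℤ) ≃ (Fin d → ℤ))
    (he : ∀ m, latNorm (e m) = latNorm m) (k : ℕ) (f : (Fin d → ℤ) → M) :
    ∑ m ∈ latShell d k, f (e m) = ∑ m ∈ latShell d k, f m :=
  sum_equiv e (fun m => by simp only [mem_latShell, he]) fun _ _ => rfl

lemma latNorm_update_neg (m : Fin d → ℤ) (i : Fin d) :
    latNorm (Function.update m i (-m i)) = latNorm m := by
  refine congrArg univ.sup (funext fun j => ?_)
  by_cases h : j = i
  · subst h; rw [Function.update_self, Int.natAbs_neg]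
  · rw [Function.update_of_ne h]

lemma latNorm_comp_perm (m : Fin d → ℤ) (e : Equiv.Perm (Fin d)) :
    latNorm (m ∘ e) = latNorm m :=
  eq_of_forall_ge_iff fun _ => by
    simp only [latNorm_le_iff]
    exact ⟨fun h i => by simpa using h (e.symm i), fun h i => h (e i)⟩

lemma sum_latShell_mul_of_ne {i j : Fin d} (hij : i ≠ j) (k : ℕ) :
    ∑ m ∈ latShell d k, (m i : ℝ) * m j = 0 := by
  have hinv : Function.Involutive fun m : Fin d → ℤ => Function.update m i (-m i) := fun m => by
    simp only [Function.update_self, neg_neg, Function.update_idem, Function.update_eq_self]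
  have h := sum_latShell_comp_equiv hinv.toPerm (latNorm_update_neg · i) k fun m => (m i : ℝ) * m j
  simp only [Function.Involutive.coe_toPerm, Function.update_self, Function.update_of_ne hij.symm,
    Int.cast_neg, neg_mul, sum_neg_distrib] at h
  linarith

lemma sum_latShell_sq_eq (i j : Fin d) (k : ℕ) :
    ∑ m ∈ latShell d k, (m i : ℝ) ^ 2 = ∑ m ∈ latShell d k, (m j : ℝ) ^ 2 := by
  have h := sum_latShell_comp_equiv ((Equiv.swap i j).arrowCongr (Equiv.refl ℤ))
    (fun m => latNorm_comp_perm m _) k fun m => (m i : ℝ) ^ 2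
  simpa using h.symm

/-- The pairing `m · ξ` of a lattice point with a frequency. -/
def latDot (m : Fin d → ℤ) (ξ : Fin d → ℝ) : ℝ := ∑ i, (m i : ℝ) * ξ i

-- Sign changes of single coordinates kill the cross terms; permutations equalise the others.
lemma card_mul_sum_latShell_latDot_sq (ξ : Fin d → ℝ) (k : ℕ) :
    d * ∑ m ∈ latShell d k, latDot m ξ ^ 2 =
      (∑ i, ξ i ^ 2) * ∑ m ∈ latShell d k, ∑ i, (m i : ℝ) ^ 2 := by
  have diagonal (i : Fin d) : ∑ j, ξ i * ξ j * ∑ m ∈ latShell d k, (m i : ℝ) * m j =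
      ξ i ^ 2 * ∑ m ∈ latShell d k, (m i : ℝ) ^ 2 := by
    rw [sum_eq_single i (fun j _ hji => by rw [sum_latShell_mul_of_ne hji.symm, mul_zero])
      (fun h => absurd (mem_univ i) h)]
    simp only [sq]
  have expand : ∑ m ∈ latShell d k, latDot m ξ ^ 2 =
      ∑ i, ξ i ^ 2 * ∑ m ∈ latShell d k, (m i : ℝ) ^ 2 := calc
    _ = ∑ m ∈ latShell d k, ∑ i, ∑ j, ξ i * ξ j * ((m i : ℝ) * m j) :=
        sum_congr rfl fun m _ => by
          rw [latDot, sq, sum_mul_sum]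
          exact sum_congr rfl fun i _ => sum_congr rfl fun j _ => by ring
    _ = ∑ i, ∑ j, ξ i * ξ j * ∑ m ∈ latShell d k, (m i : ℝ) * m j := by
        simp only [mul_sum]
        rw [sum_comm]
        exact sum_congr rfl fun i _ => sum_comm
    _ = _ := sum_congr rfl fun i _ => diagonal i
  have isotropic (i : Fin d) : (d : ℝ) * ∑ m ∈ latShell d k, (m i : ℝ) ^ 2 =
      ∑ m ∈ latShell d k, ∑ j, (m j : ℝ) ^ 2 := by
    rw [sum_comm, sum_congr rfl fun j _ => sum_latShell_sq_eq j i k, sum_const, card_univ,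
      Fintype.card_fin, nsmul_eq_mul]
  rw [expand, mul_sum, sum_mul]
  exact sum_congr rfl fun i _ => by rw [← isotropic i]; ring

lemma latNorm_sq_le_sum_sq (m : Fin d → ℤ) : (latNorm m : ℝ) ^ 2 ≤ ∑ i, (m i : ℝ) ^ 2 := by
  rcases isEmpty_or_nonempty (Fin d) with hd | hd
  · simp [latNorm]
  · obtain ⟨i, -, hi⟩ := exists_mem_eq_sup univ univ_nonempty fun i => (m i).natAbs
    rw [latNorm, hi, Nat.cast_natAbs, Int.cast_abs, sq_abs]
    exact single_le_sum (f := fun i => (m i : ℝ) ^ 2) (fun i _ => sq_nonneg _) (mem_univ i)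

lemma sum_sq_le_latNorm_sq (m : Fin d → ℤ) : ∑ i, (m i : ℝ) ^ 2 ≤ d * (latNorm m : ℝ) ^ 2 := by
  have h (i : Fin d) : (m i : ℝ) ^ 2 ≤ (latNorm m : ℝ) ^ 2 := by
    rw [← sq_abs, ← Int.cast_abs, ← Nat.cast_natAbs]
    gcongr
    exact natAbs_le_latNorm m i
  simpa using sum_le_card_nsmul univ _ _ fun i _ => h i

lemma latDot_sq_le (m : Fin d → ℤ) (ξ : Fin d → ℝ) :
    latDot m ξ ^ 2 ≤ d * (latNorm m : ℝ) ^ 2 * ∑ i, ξ i ^ 2 :=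
  (sum_mul_sq_le_sq_mul_sq _ _ _).trans <|
    mul_le_mul_of_nonneg_right (sum_sq_le_latNorm_sq m) (sum_nonneg fun _ _ => sq_nonneg _)

lemma latDot_single (i : Fin d) (ξ : Fin d → ℝ) : latDot (Pi.single i 1) ξ = ξ i := by
  rw [latDot, sum_eq_single i (fun j _ hj => by simp [hj]) (by simp)]
  simp

lemma latNorm_single (i : Fin d) : latNorm (Pi.single i 1 : Fin d → ℤ) = 1 := by
  refine le_antisymm (latNorm_le_iff.mpr fun j => ?_) ?_
  · by_cases h : j = i
    · subst h; simp
    · simp [h]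
  · simpa using natAbs_le_latNorm (Pi.single i 1 : Fin d → ℤ) i

/-- The sum of `sin²(m · ξ / 2)` over the shell `|m| = k`, so that
`σ(ξ) = 2 Σ_k J_k shellSinSq ξ k`. -/
def shellSinSq (ξ : Fin d → ℝ) (k : ℕ) : ℝ :=
  ∑ m ∈ latShell d k, sin (latDot m ξ / 2) ^ 2

lemma shellSinSq_nonneg (ξ : Fin d → ℝ) (k : ℕ) : 0 ≤ shellSinSq ξ k :=
  sum_nonneg fun _ _ => sq_nonneg _

lemma sq_div_pi_le_sin_sq {x : ℝ} (hx : |x| ≤ π) : (x / π) ^ 2 ≤ sin (x / 2) ^ 2 := by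
  have hsin := mul_abs_le_abs_sin (x := x / 2) (by rw [abs_div, abs_two]; linarith)
  refine sq_le_sq.mpr (le_of_eq_of_le ?_ hsin)
  rw [abs_div, abs_div, abs_of_pos pi_pos, abs_two]
  ring

lemma sin_half_latDot_sq_le (m : Fin d → ℤ) (ξ : Fin d → ℝ) :
    sin (latDot m ξ / 2) ^ 2 ≤ (d + 1) * min 1 ((latNorm m : ℝ) ^ 2 * ∑ i, ξ i ^ 2) := by
  have hR : 0 ≤ (latNorm m : ℝ) ^ 2 * ∑ i, ξ i ^ 2 :=
    mul_nonneg (sq_nonneg _) (sum_nonneg fun _ _ => sq_nonneg _)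
  rw [mul_min_of_nonneg _ _ (by positivity)]
  refine le_min ((sin_sq_le_one _).trans (by simp)) (sin_sq_le_sq.trans ?_)
  linarith [latDot_sq_le m ξ, sq_nonneg (latDot m ξ), div_pow (latDot m ξ) 2 2]

lemma shellSinSq_le_card_mul (ξ : Fin d → ℝ) (k : ℕ) :
    shellSinSq ξ k ≤ #(latShell d k) *
      ((d + 1) * min 1 ((k : ℝ) ^ 2 * ∑ i, ξ i ^ 2)) := by
  rw [← nsmul_eq_mul]
  refine sum_le_card_nsmul _ _ _ fun m hm => ?_
  simpa only [mem_latShell.mp hm] using sin_half_latDot_sq_le m ξ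

lemma card_mul_le_shellSinSq {ξ : Fin d → ℝ} {k : ℕ}
    (hk : d * (k : ℝ) ^ 2 * ∑ i, ξ i ^ 2 ≤ π ^ 2) :
    (∑ i, ξ i ^ 2) * (#(latShell d k) * (k : ℝ) ^ 2) ≤
      d * (π ^ 2 * shellSinSq ξ k) := by
  have hterm : ∀ m ∈ latShell d k,
      latDot m ξ ^ 2 ≤ π ^ 2 * sin (latDot m ξ / 2) ^ 2 := fun m hm => by
    have habs : |latDot m ξ| ≤ π := abs_le_of_sq_le_sq
      ((latDot_sq_le m ξ).trans (by rwa [mem_latShell.mp hm])) pi_nonneg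
    have h := sq_div_pi_le_sin_sq habs
    rwa [div_pow, div_le_iff₀' (by positivity)] at h
  have hsq : #(latShell d k) * (k : ℝ) ^ 2 ≤
      ∑ m ∈ latShell d k, ∑ i, (m i : ℝ) ^ 2 := by
    rw [← nsmul_eq_mul]
    refine card_nsmul_le_sum _ _ _ fun m hm => ?_
    simpa only [mem_latShell.mp hm] using latNorm_sq_le_sum_sq m
  calc _ ≤ (∑ i, ξ i ^ 2) * ∑ m ∈ latShell d k, ∑ i, (m i : ℝ) ^ 2 :=
        mul_le_mul_of_nonneg_left hsq (sum_nonneg fun _ _ => sq_nonneg _)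
    _ = d * ∑ m ∈ latShell d k, latDot m ξ ^ 2 := (card_mul_sum_latShell_latDot_sq ξ k).symm
    _ ≤ d * (π ^ 2 * shellSinSq ξ k) := by
        refine mul_le_mul_of_nonneg_left ?_ d.cast_nonneg
        rw [shellSinSq, mul_sum]
        exact sum_le_sum hterm

lemma sq_mul_pow_le_shellSinSq {ξ : Fin d → ℝ} {k : ℕ}
    (hk : d * (k : ℝ) ^ 2 * ∑ i, ξ i ^ 2 ≤ π ^ 2) :
    2 / π ^ 2 * (∑ i, ξ i ^ 2) * (k : ℝ) ^ (d + 1) ≤ shellSinSq ξ k := by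
  rcases eq_or_ne k 0 with rfl | hk0
  · simpa using shellSinSq_nonneg ξ 0
  rcases d with - | n
  · simpa using shellSinSq_nonneg ξ k
  have hsum : 0 ≤ ∑ i, ξ i ^ 2 := sum_nonneg fun _ _ => sq_nonneg _
  have hcard := mul_le_mul_of_nonneg_left (mul_le_mul_of_nonneg_right
    (le_card_latShell (d := n + 1) hk0) (sq_nonneg (k : ℝ))) hsum
  have h := hcard.trans (card_mul_le_shellSinSq hk)
  refine le_of_mul_le_mul_left ?_ (show 0 < ((n + 1 : ℕ) : ℝ) * π ^ 2 by positivity)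
  refine le_of_eq_of_le ?_ (h.trans_eq (mul_assoc _ _ _).symm)
  rw [Nat.add_sub_cancel]
  field_simp
  ring

lemma sum_sq_div_pi_sq_le_shellSinSq_one {ξ : Fin d → ℝ} (hξ : ∀ i, |ξ i| ≤ π) :
    (∑ i, ξ i ^ 2) / π ^ 2 ≤ shellSinSq ξ 1 := by
  have hinj : Function.Injective fun i : Fin d => (Pi.single i 1 : Fin d → ℤ) := fun i j h => by
    by_contra hij
    simpa [hij] using congrFun h i
  calc (∑ i, ξ i ^ 2) / π ^ 2 ≤ ∑ i, sin (latDot (Pi.single i 1) ξ / 2) ^ 2 := by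
        simp only [sum_div, ← div_pow, latDot_single]
        exact sum_le_sum fun i _ => sq_div_pi_le_sin_sq (hξ i)
    _ = ∑ m ∈ univ.map ⟨_, hinj⟩, sin (latDot m ξ / 2) ^ 2 := by
        rw [sum_map]; rfl
    _ ≤ shellSinSq ξ 1 := by
        refine sum_le_sum_of_subset_of_nonneg (fun m hm => ?_) fun _ _ _ => sq_nonneg _
        obtain ⟨i, -, rfl⟩ := mem_map.mp hm
        exact mem_latShell.mpr (latNorm_single i)

lemma preimage_latNorm_singleton (k : ℕ) :
    (latNorm : (Fin d → ℤ) → ℕ) ⁻¹' {k} = latShell d k :=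
  Set.ext fun _ => mem_latShell.symm

lemma tsum_eq_tsum_sum_latShell {f : (Fin d → ℤ) → ℝ} (hf : 0 ≤ f)
    (hs : Summable fun k => ∑ m ∈ latShell d k, f m) :
    ∑' m, f m = ∑' k, ∑ m ∈ latShell d k, f m := by
  have hfiber (k : ℕ) : ∑' m : (latNorm : (Fin d → ℤ) → ℕ) ⁻¹' {k}, f m =
      ∑ m ∈ latShell d k, f m := by
    rw [preimage_latNorm_singleton]
    exact tsum_subtype' (latShell d k) f
  have hsummable : Summable f := by
    refine (summable_partition hf (s := fun k => latNorm ⁻¹' {k}) fun m =>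
      ⟨latNorm m, rfl, fun k hk => hk.symm⟩).mpr ⟨fun k => ?_, by simpa only [hfiber] using hs⟩
    rw [preimage_latNorm_singleton]
    exact (latShell d k).summable f
  rw [← (hsummable.hasSum.tsum_fiberwise latNorm).tsum_eq]
  exact tsum_congr hfiber

variable {J : ℕ → ℝ}

lemma symbol_eq_tsum_shellSinSq (hJ : ∀ k, 0 ≤ J k) {ξ : Fin d → ℝ}
    (hs : Summable fun k => J k * shellSinSq ξ k) :
    symbol d J ξ = 2 * ∑' k, J k * shellSinSq ξ k := by
  have hshell (k : ℕ) : J k * shellSinSq ξ k =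
      ∑ m ∈ latShell d k, J (latNorm m) * sin (latDot m ξ / 2) ^ 2 := by
    rw [shellSinSq, mul_sum]
    exact sum_congr rfl fun m hm => by rw [mem_latShell.mp hm]
  have hterm (m : Fin d → ℤ) : (if m = 0 then 0 else
      J (latNorm m) * sin ((∑ i, (m i : ℝ) * ξ i) / 2) ^ 2) =
      J (latNorm m) * sin (latDot m ξ / 2) ^ 2 := by
    split_ifs with h
    · simp [h, latDot]
    · rfl
  simp only [hshell] at hs ⊢
  rw [symbol, tsum_congr hterm,
    tsum_eq_tsum_sum_latShell (fun m => mul_nonneg (hJ _) (sq_nonneg _)) hs]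

end Shells

section ModelSymbol

open Finset Real

variable {a r : ℝ}

/-- The model `Σ_k k^(-1-a) min(1, k² r²)` of the symbol: it comes from replacing `J_k` by
`k^(-d-a)` and `sin²(m · ξ / 2)` by `min(1, |m|² r²)`, there being about `k^(d-1)` points `m` in
the shell `|m| = k`. -/
def modelSymbol (a r : ℝ) : ℝ := ∑' k : ℕ, (k : ℝ) ^ (-1 - a) * min 1 ((k : ℝ) ^ 2 * r ^ 2)

/-- The truncated second moment `Σ_{1 ≤ k ≤ n} k² k^(-1-a)` of the weights of `modelSymbol`,
with the summation index shifted by one. -/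
def secondMoment (a : ℝ) (n : ℕ) : ℝ := ∑ k ∈ range n, ((k : ℝ) + 1) ^ (1 - a)

lemma secondMoment_nonneg (a : ℝ) (n : ℕ) : 0 ≤ secondMoment a n :=
  sum_nonneg fun _ _ => by positivity

lemma secondMoment_two (n : ℕ) : secondMoment 2 n = harmonic n := by
  simp only [secondMoment, harmonic, show (1 : ℝ) - 2 = -1 by norm_num, rpow_neg_one]
  push_cast
  rfl

lemma sum_add_one_rpow_sub_one_le {p : ℝ} (hp : 0 < p) (hp1 : p ≤ 1) (n : ℕ) :
    ∑ k ∈ range n, ((k : ℝ) + 1) ^ (p - 1) ≤ (n : ℝ) ^ p / p := by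
  induction n with
  | zero => simp [hp.ne']
  | succ n ih =>
    have hn : (0 : ℝ) < n + 1 := by positivity
    have bernoulli : (1 + -((n : ℝ) + 1)⁻¹) ^ p ≤ 1 + p * -((n : ℝ) + 1)⁻¹ :=
      rpow_one_add_le_one_add_mul_self
        (neg_le_neg (inv_le_one_of_one_le₀ (by linarith [n.cast_nonneg (α := ℝ)]))) hp.le hp1
    have increment : (n : ℝ) ^ p ≤ ((n : ℝ) + 1) ^ p - p * ((n : ℝ) + 1) ^ (p - 1) := by
      calc (n : ℝ) ^ p = ((n : ℝ) + 1) ^ p * (1 + -((n : ℝ) + 1)⁻¹) ^ p := by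
            rw [show 1 + -((n : ℝ) + 1)⁻¹ = n / (n + 1) by field_simp; ring,
              div_rpow n.cast_nonneg hn.le, mul_div_cancel₀ _ (rpow_pos_of_pos hn p).ne']
        _ ≤ ((n : ℝ) + 1) ^ p * (1 + p * -((n : ℝ) + 1)⁻¹) := by gcongr
        _ = _ := by rw [rpow_sub_one hn.ne']; ring
    rw [sum_range_succ, Nat.cast_add_one, le_div_iff₀ hp]
    rw [le_div_iff₀ hp] at ih
    linarith

lemma secondMoment_le (ha : a < 2) (n : ℕ) :
    secondMoment a n ≤ (1 + 1 / (2 - a)) * (n : ℝ) ^ (2 - a) := by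
  have hp : 0 < 2 - a := by linarith
  have hpow : (0 : ℝ) ≤ (n : ℝ) ^ (2 - a) := by positivity
  rcases le_total 1 a with h | h
  · calc secondMoment a n = ∑ k ∈ range n, ((k : ℝ) + 1) ^ (2 - a - 1) := by
          rw [secondMoment, show 2 - a - 1 = 1 - a by ring]
      _ ≤ (n : ℝ) ^ (2 - a) / (2 - a) := sum_add_one_rpow_sub_one_le hp (by linarith) n
      _ ≤ (1 + 1 / (2 - a)) * (n : ℝ) ^ (2 - a) := by rw [add_mul, one_div_mul_eq_div]; linarith
  · calc secondMoment a n ≤ #(range n) • (n : ℝ) ^ (1 - a) := by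
          refine sum_le_card_nsmul _ _ _ fun k hk => ?_
          have hkn : (k : ℝ) + 1 ≤ n := mod_cast mem_range.mp hk
          gcongr
      _ = (n : ℝ) ^ (2 - a) := by
          rw [card_range, nsmul_eq_mul, ← rpow_one_add' n.cast_nonneg (by linarith)]
          ring_nf
      _ ≤ (1 + 1 / (2 - a)) * (n : ℝ) ^ (2 - a) :=
          le_mul_of_one_le_left hpow (by linarith [one_div_pos.mpr hp])

lemma sum_range_add_one (n : ℕ) : ∑ k ∈ range n, ((k : ℝ) + 1) = n * (n + 1) / 2 := by
  induction n with
  | zero => simp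
  | succ n ih => rw [sum_range_succ, ih]; push_cast; ring

lemma add_one_rpow_le_secondMoment (ha : 0 ≤ a) (n : ℕ) :
    ((n : ℝ) + 1) ^ (2 - a) ≤ 4 * (1 + secondMoment a n) := by
  rcases n.eq_zero_or_pos with rfl | hn
  · simp [secondMoment]
  have hn1 : (1 : ℝ) ≤ n := mod_cast hn
  have hn0 : (0 : ℝ) < n + 1 := by positivity
  have hterm (k : ℕ) (hk : k ∈ range n) :
      ((k : ℝ) + 1) * ((n : ℝ) + 1) ^ (-a) ≤ ((k : ℝ) + 1) ^ (1 - a) := by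
    have hkn : (k : ℝ) + 1 ≤ n + 1 := mod_cast Nat.succ_le_succ (mem_range.mp hk).le
    rw [sub_eq_add_neg, rpow_add (by positivity), rpow_one]
    gcongr ((k : ℝ) + 1) * ?_
    exact rpow_le_rpow_of_nonpos (by positivity) hkn (by linarith)
  have hsum : (n : ℝ) * (n + 1) / 2 * ((n : ℝ) + 1) ^ (-a) ≤ secondMoment a n := by
    rw [← sum_range_add_one, sum_mul]
    exact sum_le_sum hterm
  calc ((n : ℝ) + 1) ^ (2 - a) = ((n : ℝ) + 1) ^ 2 * ((n : ℝ) + 1) ^ (-a) := by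
        rw [sub_eq_add_neg, rpow_add hn0, rpow_two]
    _ ≤ 4 * (n * (n + 1) / 2) * ((n : ℝ) + 1) ^ (-a) := by gcongr; nlinarith
    _ ≤ 4 * (1 + secondMoment a n) := by linarith

lemma sum_add_rpow_neg_one_sub_le (ha : 0 < a) {x : ℝ} (hx : 0 < x) (N : ℕ) :
    ∑ k ∈ range N, (x + (k + 1 : ℕ)) ^ (-1 - a) ≤ x ^ (-a) / a := by
  have hpos : Set.Icc x (x + N) ⊆ Set.Ioi 0 := fun y hy => hx.trans_le hy.1
  have hle : x ≤ x + N := le_add_of_nonneg_right N.cast_nonneg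
  calc ∑ k ∈ range N, (x + (k + 1 : ℕ)) ^ (-1 - a) ≤ ∫ y in x..x + N, y ^ (-1 - a) :=
        ((antitoneOn_rpow_Ioi_of_exponent_nonpos (by linarith)).mono hpos).sum_le_integral
    _ = (x ^ (-a) - (x + N) ^ (-a)) / a := by
        rw [integral_rpow (.inr ⟨by linarith, fun h => ?_⟩), show -1 - a + 1 = -a by ring,
          div_neg, ← neg_div, neg_sub]
        rw [Set.uIcc_of_le hle] at h
        exact (lt_irrefl (0 : ℝ)) (Set.mem_Ioi.mp (hpos h))
    _ ≤ x ^ (-a) / a := by gcongr; exact sub_le_self _ (by positivity)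

lemma summable_modelSymbol (ha : 0 < a) (r : ℝ) :
    Summable fun k : ℕ => (k : ℝ) ^ (-1 - a) * min 1 ((k : ℝ) ^ 2 * r ^ 2) :=
  (summable_nat_rpow.mpr (by linarith : -1 - a < -1)).of_nonneg_of_le (fun _ => by positivity)
    fun _ => mul_le_of_le_one_right (by positivity) (min_le_left _ _)

lemma add_one_rpow_mul_sq (a : ℝ) (k : ℕ) :
    ((k : ℝ) + 1) ^ (-1 - a) * ((k : ℝ) + 1) ^ 2 = ((k : ℝ) + 1) ^ (1 - a) := by
  rw [← rpow_two, ← rpow_add (by positivity)]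
  ring_nf

-- Up to `n` the minimum is bounded by its second entry, beyond `n` by its first.
lemma modelSymbol_le (ha : 0 < a) {n : ℕ} (hn : 0 < n) (r : ℝ) :
    modelSymbol a r ≤ r ^ 2 * secondMoment a n + (n : ℝ) ^ (-a) / a := by
  rw [modelSymbol, ← (summable_modelSymbol ha r).sum_add_tsum_nat_add (n + 1)]
  gcongr
  · rw [sum_range_succ', secondMoment, mul_sum]
    simp only [Nat.cast_zero, ne_eq, OfNat.ofNat_ne_zero, not_false_eq_true, zero_pow, zero_mul,
      zero_le_one, inf_of_le_right, mul_zero, add_zero, Nat.cast_add_one]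
    refine sum_le_sum fun k _ => ?_
    rw [← add_one_rpow_mul_sq, mul_comm (r ^ 2), mul_assoc]
    gcongr
    exact min_le_right _ _
  · refine Real.tsum_le_of_sum_range_le (fun _ => by positivity) fun N => ?_
    refine (sum_le_sum fun k _ => ?_).trans (sum_add_rpow_neg_one_sub_le ha (Nat.cast_pos.mpr hn) N)
    rw [show ((k + (n + 1) : ℕ) : ℝ) = n + (k + 1 : ℕ) by push_cast; ring]
    exact mul_le_of_le_one_right (by positivity) (min_le_left _ _)

lemma modelSymbol_le_sq_mul_tsum (ha : 2 < a) (r : ℝ) :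
    modelSymbol a r ≤ r ^ 2 * ∑' k : ℕ, (k : ℝ) ^ (1 - a) := by
  have hsummable : Summable fun k : ℕ => (k : ℝ) ^ (1 - a) :=
    summable_nat_rpow.mpr (by linarith)
  rw [modelSymbol, ← tsum_mul_left]
  refine (summable_modelSymbol (by linarith) r).tsum_le_tsum (fun k => ?_) (hsummable.mul_left _)
  rcases k with - | k
  · simpa using mul_nonneg (sq_nonneg r) (zero_rpow_nonneg (1 - a))
  · rw [Nat.cast_add_one, ← add_one_rpow_mul_sq, mul_comm (r ^ 2), mul_assoc]
    gcongr
    exact min_le_right _ _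

lemma modelSymbol_zero (a : ℝ) : modelSymbol a 0 = 0 := by simp [modelSymbol]

lemma deltaFun_ofReal_of_lt_two (ha : 0 ≤ a) (ha2 : a < 2) (r : ℝ) :
    deltaFun (ENNReal.ofReal a) r = r ^ a := by
  rw [deltaFun, if_pos (ENNReal.ofReal_lt_ofNat.mpr ha2), ENNReal.toReal_ofReal ha]

lemma deltaFun_ofReal_two (r : ℝ) :
    deltaFun (ENNReal.ofReal 2) r = r ^ 2 * (1 + |log r|) := by
  simp [deltaFun]

lemma deltaFun_of_two_lt {α : ℝ≥0∞} (hα : 2 < α) (r : ℝ) : deltaFun α r = r ^ 2 := by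
  rw [deltaFun, if_neg hα.not_gt, if_neg hα.ne']

lemma deltaFun_nonneg (α : ℝ≥0∞) (hr : 0 ≤ r) : 0 ≤ deltaFun α r := by
  unfold deltaFun
  split_ifs <;> positivity

lemma deltaFun_ofReal_zero (ha : 0 < a) : deltaFun (ENNReal.ofReal a) 0 = 0 := by
  simp [deltaFun, ENNReal.toReal_ofReal ha.le, zero_rpow ha.ne']

lemma sq_mul_div_rpow_two_sub (hr : 0 < r) {x : ℝ} (hx : 0 ≤ x) (a : ℝ) :
    r ^ 2 * (x / r) ^ (2 - a) = x ^ (2 - a) * r ^ a := by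
  rw [div_rpow hx hr.le, rpow_sub hr, rpow_two]
  field_simp

lemma ceil_inv_le_div {R : ℝ} (hr : 0 < r) (hrR : r ≤ R) : (⌈r⁻¹⌉₊ : ℝ) ≤ (1 + R) / r := by
  rw [le_div_iff₀ hr]
  calc (⌈r⁻¹⌉₊ : ℝ) * r ≤ (r⁻¹ + 1) * r := by gcongr; exact (Nat.ceil_lt_add_one (by positivity)).le
    _ ≤ 1 + R := by rw [add_mul, inv_mul_cancel₀ hr.ne', one_mul]; linarith

lemma modelSymbol_le_of_pos (ha : 0 < a) (hr : 0 < r) :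
    modelSymbol a r ≤ r ^ 2 * secondMoment a ⌈r⁻¹⌉₊ + r ^ a / a := by
  refine (modelSymbol_le ha (Nat.ceil_pos.mpr (inv_pos.mpr hr)) r).trans ?_
  gcongr
  calc (⌈r⁻¹⌉₊ : ℝ) ^ (-a) ≤ r⁻¹ ^ (-a) :=
        rpow_le_rpow_of_nonpos (by positivity) (Nat.le_ceil _) (by linarith)
    _ = r ^ a := by rw [rpow_neg (by positivity), inv_rpow hr.le, inv_inv]

lemma modelSymbol_le_of_lt_two {R : ℝ} (ha : 0 < a) (ha2 : a < 2) (hr : 0 < r) (hrR : r ≤ R) :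
    modelSymbol a r ≤ ((1 + 1 / (2 - a)) * (1 + R) ^ (2 - a) + 1 / a) * r ^ a := by
  have hR : 0 < R := hr.trans_le hrR
  calc modelSymbol a r ≤ r ^ 2 * secondMoment a ⌈r⁻¹⌉₊ + r ^ a / a := modelSymbol_le_of_pos ha hr
    _ ≤ r ^ 2 * ((1 + 1 / (2 - a)) * ((1 + R) / r) ^ (2 - a)) + r ^ a / a := by
        gcongr
        refine (secondMoment_le ha2 _).trans ?_
        gcongr
        exact ceil_inv_le_div hr hrR
    _ = _ := by
        rw [mul_left_comm, sq_mul_div_rpow_two_sub hr (by positivity)]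
        ring

lemma modelSymbol_two_le {R : ℝ} (hr : 0 < r) (hrR : r ≤ R) :
    modelSymbol 2 r ≤ (2 + log (1 + R)) * (r ^ 2 * (1 + |log r|)) := by
  have hR : 0 < log (1 + R) := log_pos (by linarith)
  have hlog : secondMoment 2 ⌈r⁻¹⌉₊ ≤ 1 + (log (1 + R) + |log r|) := by
    rw [secondMoment_two]
    refine (harmonic_le_one_add_log _).trans (add_le_add_right ?_ 1)
    calc log ⌈r⁻¹⌉₊ ≤ log ((1 + R) / r) :=
          log_le_log (Nat.cast_pos.mpr (Nat.ceil_pos.mpr (by positivity))) (ceil_inv_le_div hr hrR)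
      _ ≤ log (1 + R) + |log r| := by
          rw [log_div (by linarith) hr.ne']
          linarith [neg_le_abs (log r)]
  calc modelSymbol 2 r ≤ r ^ 2 * secondMoment 2 ⌈r⁻¹⌉₊ + r ^ (2 : ℝ) / 2 :=
        modelSymbol_le_of_pos two_pos hr
    _ ≤ r ^ 2 * (1 + (log (1 + R) + |log r|)) + r ^ 2 / 2 := by rw [rpow_two]; gcongr
    _ ≤ (2 + log (1 + R)) * (r ^ 2 * (1 + |log r|)) := by
        nlinarith [mul_nonneg (sq_nonneg r) (abs_nonneg (log r)),
          mul_nonneg hR.le (mul_nonneg (sq_nonneg r) (abs_nonneg (log r))), sq_nonneg r]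

lemma exists_modelSymbol_le_deltaFun (ha : 0 < a) (R : ℝ) :
    ∃ C, 0 < C ∧ ∀ r, 0 ≤ r → r ≤ R → modelSymbol a r ≤ C * deltaFun (ENNReal.ofReal a) r := by
  suffices ∃ C, ∀ r, 0 < r → r ≤ R → modelSymbol a r ≤ C * deltaFun (ENNReal.ofReal a) r by
    obtain ⟨C, hC⟩ := this
    refine ⟨max C 1, by positivity, fun r hr hrR => ?_⟩
    rcases hr.eq_or_lt with rfl | hr
    · rw [modelSymbol_zero, deltaFun_ofReal_zero ha, mul_zero]
    · exact (hC r hr hrR).trans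
        (mul_le_mul_of_nonneg_right (le_max_left C 1) (deltaFun_nonneg _ hr.le))
  rcases lt_trichotomy a 2 with ha2 | rfl | ha2
  · refine ⟨(1 + 1 / (2 - a)) * (1 + R) ^ (2 - a) + 1 / a, fun r hr hrR => ?_⟩
    rw [deltaFun_ofReal_of_lt_two ha.le ha2]
    exact modelSymbol_le_of_lt_two ha ha2 hr hrR
  · refine ⟨2 + log (1 + R), fun r hr hrR => ?_⟩
    rw [deltaFun_ofReal_two]
    exact modelSymbol_two_le hr hrR
  · refine ⟨∑' k : ℕ, (k : ℝ) ^ (1 - a), fun r _ _ => ?_⟩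
    rw [deltaFun_of_two_lt (ENNReal.ofNat_lt_ofReal.mpr ha2), mul_comm]
    exact modelSymbol_le_sq_mul_tsum ha2 r

lemma rpow_le_sq_mul_one_add_secondMoment {η : ℝ} (ha : 0 ≤ a) (ha2 : a ≤ 2) (hη : 0 < η)
    (hr : 0 < r) :
    η ^ (2 - a) / 4 * r ^ a ≤ r ^ 2 * (1 + secondMoment a ⌊η / r⌋₊) := by
  have hfloor : (η / r) ^ (2 - a) ≤ (⌊η / r⌋₊ + 1 : ℝ) ^ (2 - a) :=
    rpow_le_rpow (by positivity) (Nat.lt_floor_add_one _).le (by linarith)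
  calc η ^ (2 - a) / 4 * r ^ a = r ^ 2 * ((η / r) ^ (2 - a) / 4) := by
        rw [← mul_div_assoc, sq_mul_div_rpow_two_sub hr hη.le]; ring
    _ ≤ r ^ 2 * (1 + secondMoment a ⌊η / r⌋₊) := by
        gcongr
        linarith [add_one_rpow_le_secondMoment ha ⌊η / r⌋₊]

lemma one_add_abs_log_le {η R : ℝ} (hη : 0 < η) (hr : 0 < r) (hrR : r ≤ R) :
    1 + |log r| ≤ (1 + (|log η| + |log R|)) * (1 + secondMoment 2 ⌊η / r⌋₊) := by
  have hmoment := secondMoment_nonneg 2 ⌊η / r⌋₊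
  have hfloor : log η - log r ≤ secondMoment 2 ⌊η / r⌋₊ := by
    rw [← log_div hη.ne' hr.ne', secondMoment_two]
    refine (log_le_log (by positivity) ?_).trans (log_add_one_le_harmonic _)
    rw [Nat.cast_add_one]
    exact (Nat.lt_floor_add_one _).le
  have hlog : |log r| ≤ |log η| + |log R| + secondMoment 2 ⌊η / r⌋₊ :=
    abs_le.mpr ⟨by linarith [neg_abs_le (log η), abs_nonneg (log R)],
      by linarith [log_le_log hr hrR, le_abs_self (log R), abs_nonneg (log η)]⟩
  nlinarith [mul_nonneg (abs_nonneg (log η)) hmoment, mul_nonneg (abs_nonneg (log R)) hmoment]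

lemma exists_deltaFun_le_secondMoment {η : ℝ} (ha : 0 < a) (ha2 : a ≤ 2) (hη : 0 < η) (R : ℝ) :
    ∃ c, 0 < c ∧ ∀ r, 0 ≤ r → r ≤ R →
      c * deltaFun (ENNReal.ofReal a) r ≤ r ^ 2 * (1 + secondMoment a ⌊η / r⌋₊) := by
  suffices ∃ c, 0 < c ∧ ∀ r, 0 < r → r ≤ R →
      c * deltaFun (ENNReal.ofReal a) r ≤ r ^ 2 * (1 + secondMoment a ⌊η / r⌋₊) by
    obtain ⟨c, hc, h⟩ := this
    refine ⟨c, hc, fun r hr hrR => ?_⟩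
    rcases hr.eq_or_lt with rfl | hr
    · simp [deltaFun_ofReal_zero ha]
    · exact h r hr hrR
  rcases ha2.lt_or_eq with ha2 | rfl
  · refine ⟨η ^ (2 - a) / 4, by positivity, fun r hr _ => ?_⟩
    rw [deltaFun_ofReal_of_lt_two ha.le ha2]
    exact rpow_le_sq_mul_one_add_secondMoment ha.le ha2.le hη hr
  · refine ⟨(1 + (|log η| + |log R|))⁻¹, by positivity, fun r hr hrR => ?_⟩
    rw [deltaFun_ofReal_two, inv_mul_le_iff₀ (by positivity), mul_left_comm]
    gcongr
    exact one_add_abs_log_le hη hr hrR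

end ModelSymbol

section SymbolBounds

open Finset Real Asymptotics

variable {d : ℕ} {J : ℕ → ℝ} {a : ℝ}

lemma rpow_mul_mul_pow_sub_one {x : ℝ} (hx : x ≠ 0) (d : ℕ) (a : ℝ) :
    x ^ (-((d : ℝ) + a)) * (d * x ^ (d - 1)) = d * x ^ (-1 - a) := by
  rcases d with - | d
  · simp
  · rw [mul_left_comm, Nat.add_sub_cancel, ← rpow_add_natCast hx]
    congr 2
    push_cast
    ring

lemma rpow_mul_pow_add_one {x : ℝ} (hx : x ≠ 0) (d : ℕ) (a : ℝ) :
    x ^ (-((d : ℝ) + a)) * x ^ (d + 1) = x ^ (1 - a) := by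
  rw [← rpow_add_natCast hx]
  congr 1
  push_cast
  ring

lemma exists_mul_shellSinSq_le (hJ : ∀ k, 0 ≤ J k)
    (hupper : J =O[atTop] fun k => (k : ℝ) ^ (-((d : ℝ) + a))) :
    ∃ C, 0 < C ∧ ∀ (ξ : Fin d → ℝ) (k : ℕ), J k * shellSinSq ξ k ≤
      C * ((k : ℝ) ^ (-1 - a) * min 1 ((k : ℝ) ^ 2 * ∑ i, ξ i ^ 2)) := by
  obtain ⟨C, hC, hbound⟩ := bound_of_isBigO_nat_atTop hupper
  refine ⟨C * (2 * 3 ^ (d - 1)) * ((d + 1) * (d + 1)), by positivity, fun ξ k => ?_⟩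
  rcases eq_or_ne k 0 with rfl | hk
  · simp [shellSinSq, latDot]
  have hk0 : (0 : ℝ) < k := Nat.cast_pos.mpr hk.bot_lt
  have hJk : J k ≤ C * (k : ℝ) ^ (-((d : ℝ) + a)) := by
    have h := hbound (x := k) (rpow_pos_of_pos hk0 _).ne'
    rwa [norm_of_nonneg (hJ k), norm_of_nonneg (by positivity)] at h
  have hshell := (shellSinSq_le_card_mul ξ k).trans
    (mul_le_mul_of_nonneg_right (card_latShell_le hk) (by positivity))
  calc J k * shellSinSq ξ k
      ≤ C * (k : ℝ) ^ (-((d : ℝ) + a)) * (2 * 3 ^ (d - 1) * (d * (k : ℝ) ^ (d - 1)) *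
          ((d + 1) * min 1 ((k : ℝ) ^ 2 * ∑ i, ξ i ^ 2))) :=
        mul_le_mul hJk hshell (shellSinSq_nonneg ξ k) (by positivity)
    _ = C * (2 * 3 ^ (d - 1)) * (d * (d + 1)) *
          ((k : ℝ) ^ (-1 - a) * min 1 ((k : ℝ) ^ 2 * ∑ i, ξ i ^ 2)) := by
        linear_combination C * (2 * 3 ^ (d - 1)) * (d + 1) *
          min 1 ((k : ℝ) ^ 2 * ∑ i, ξ i ^ 2) * rpow_mul_mul_pow_sub_one hk0.ne' d a
    _ ≤ _ := by gcongr; linarith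

lemma sq_sqrt_sum_sq (ξ : Fin d → ℝ) : √(∑ i, ξ i ^ 2) ^ 2 = ∑ i, ξ i ^ 2 :=
  sq_sqrt (sum_nonneg fun _ _ => sq_nonneg _)

lemma exists_symbol_le_modelSymbol (hJ : ∀ k, 0 ≤ J k) (ha : 0 < a)
    (hupper : J =O[atTop] fun k => (k : ℝ) ^ (-((d : ℝ) + a))) :
    ∃ C, 0 < C ∧ ∀ ξ : Fin d → ℝ, (Summable fun k => J k * shellSinSq ξ k) ∧
      symbol d J ξ ≤ C * modelSymbol a √(∑ i, ξ i ^ 2) := by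
  obtain ⟨C, hC, hterm⟩ := exists_mul_shellSinSq_le hJ hupper
  refine ⟨2 * C, by positivity, fun ξ => ?_⟩
  have hmodel := (summable_modelSymbol ha √(∑ i, ξ i ^ 2)).mul_left C
  simp only [sq_sqrt_sum_sq] at hmodel
  have hsummable : Summable fun k => J k * shellSinSq ξ k :=
    hmodel.of_nonneg_of_le (fun k => mul_nonneg (hJ k) (shellSinSq_nonneg ξ k)) (hterm ξ)
  refine ⟨hsummable, ?_⟩
  rw [symbol_eq_tsum_shellSinSq hJ hsummable, modelSymbol, mul_assoc,
    ← tsum_mul_left (a := C)]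
  simp only [sq_sqrt_sum_sq]
  exact mul_le_mul_of_nonneg_left (hsummable.tsum_le_tsum (hterm ξ) hmodel) zero_le_two

lemma sum_sq_mul_le_symbol (hJ : ∀ k, 0 ≤ J k) {ξ : Fin d → ℝ}
    (hs : Summable fun k => J k * shellSinSq ξ k) (hξ : ∀ i, |ξ i| ≤ π) :
    (∑ i, ξ i ^ 2) * J 1 ≤ π ^ 2 / 2 * symbol d J ξ := by
  have hfirst := hs.le_tsum 1 fun k _ => mul_nonneg (hJ k) (shellSinSq_nonneg ξ k)
  have hshell := mul_le_mul_of_nonneg_left (sum_sq_div_pi_sq_le_shellSinSq_one hξ) (hJ 1)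
  rw [symbol_eq_tsum_shellSinSq hJ hs]
  calc (∑ i, ξ i ^ 2) * J 1 = π ^ 2 * (J 1 * ((∑ i, ξ i ^ 2) / π ^ 2)) := by field_simp
    _ ≤ π ^ 2 * ∑' k, J k * shellSinSq ξ k := by gcongr; exact hshell.trans hfirst
    _ = _ := by ring

lemma sum_sq_mul_sum_le_symbol (hJ : ∀ k, 0 ≤ J k) {ξ : Fin d → ℝ}
    (hs : Summable fun k => J k * shellSinSq ξ k) {n : ℕ}
    (hn : d * (n : ℝ) ^ 2 * ∑ i, ξ i ^ 2 ≤ π ^ 2) :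
    (∑ i, ξ i ^ 2) * ∑ k ∈ range (n + 1), J k * (k : ℝ) ^ (d + 1) ≤
      π ^ 2 / 4 * symbol d J ξ := by
  have hterm (k : ℕ) (hk : k ∈ range (n + 1)) :
      2 / π ^ 2 * (∑ i, ξ i ^ 2) * (J k * (k : ℝ) ^ (d + 1)) ≤ J k * shellSinSq ξ k := by
    have hkn : (k : ℝ) ≤ n := Nat.cast_le.mpr (mem_range_succ_iff.mp hk)
    have hk' : d * (k : ℝ) ^ 2 * ∑ i, ξ i ^ 2 ≤ π ^ 2 := le_trans (by gcongr) hn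
    rw [mul_left_comm]
    exact mul_le_mul_of_nonneg_left (sq_mul_pow_le_shellSinSq hk') (hJ k)
  have hpartial := (sum_le_sum hterm).trans <|
    hs.sum_le_tsum _ fun k _ => mul_nonneg (hJ k) (shellSinSq_nonneg ξ k)
  rw [← mul_sum] at hpartial
  rw [symbol_eq_tsum_shellSinSq hJ hs]
  calc _ = π ^ 2 / 2 * (2 / π ^ 2 * (∑ i, ξ i ^ 2) *
        ∑ k ∈ range (n + 1), J k * (k : ℝ) ^ (d + 1)) := by field_simp
    _ ≤ π ^ 2 / 2 * ∑' k, J k * shellSinSq ξ k := by gcongr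
    _ = _ := by ring

lemma exists_secondMoment_le_sum (hJ : ∀ k, 0 ≤ J k)
    (hlower : (fun k : ℕ => (k : ℝ) ^ (-((d : ℝ) + a))) =O[atTop] J) :
    ∃ B, 0 < B ∧ ∀ n : ℕ,
      secondMoment a n ≤ B * (1 + ∑ k ∈ range (n + 1), J k * (k : ℝ) ^ (d + 1)) := by
  obtain ⟨C, hC, hbound⟩ := hlower.exists_pos
  obtain ⟨N, hN⟩ := eventually_atTop.mp hbound.bound
  have hN0 := secondMoment_nonneg a N
  refine ⟨C + secondMoment a N, by positivity, fun n => ?_⟩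
  have hnonneg (k : ℕ) : 0 ≤ J (k + 1) * ((k : ℝ) + 1) ^ (d + 1) :=
    mul_nonneg (hJ _) (by positivity)
  have hlarge (k : ℕ) (hk : N ≤ k) :
      ((k : ℝ) + 1) ^ (1 - a) ≤ C * (J (k + 1) * ((k : ℝ) + 1) ^ (d + 1)) := by
    have h := hN (k + 1) (by omega)
    rw [norm_of_nonneg (hJ _), norm_of_nonneg (by positivity), Nat.cast_add_one] at h
    rw [← rpow_mul_pow_add_one (by positivity) d a, ← mul_assoc]
    gcongr
  have hsmall : ∑ k ∈ range n with k < N, ((k : ℝ) + 1) ^ (1 - a) ≤ secondMoment a N :=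
    sum_le_sum_of_subset_of_nonneg (fun k hk => mem_range.mpr (mem_filter.mp hk).2)
      fun _ _ _ => by positivity
  have hrest : ∑ k ∈ range n with ¬ k < N, ((k : ℝ) + 1) ^ (1 - a) ≤
      C * ∑ k ∈ range n, J (k + 1) * ((k : ℝ) + 1) ^ (d + 1) := by
    refine (sum_le_sum fun k hk => hlarge k (not_lt.mp (mem_filter.mp hk).2)).trans ?_
    rw [← mul_sum]
    gcongr
    · exact fun k _ _ => hnonneg k
    · exact filter_subset _ _
  have hsum := sum_nonneg fun k (_ : k ∈ range n) => hnonneg k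
  rw [secondMoment, ← sum_filter_add_sum_filter_not (range n) (· < N), sum_range_succ']
  simp only [Nat.cast_zero, ne_eq, Nat.add_eq_zero_iff, one_ne_zero, and_false,
    not_false_eq_true, zero_pow, mul_zero, add_zero, Nat.cast_add_one]
  nlinarith [mul_nonneg hN0 hsum]

lemma exists_sq_mul_secondMoment_le_symbol (hJ : ∀ k, 0 ≤ J k) (hJ1 : 0 < J 1)
    (hlower : (fun k : ℕ => (k : ℝ) ^ (-((d : ℝ) + a))) =O[atTop] J) :
    ∃ C, 0 < C ∧ ∀ (ξ : Fin d → ℝ) (n : ℕ), (Summable fun k => J k * shellSinSq ξ k) →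
      (∀ i, |ξ i| ≤ π) → d * (n : ℝ) ^ 2 * ∑ i, ξ i ^ 2 ≤ π ^ 2 →
      (∑ i, ξ i ^ 2) * (1 + secondMoment a n) ≤ C * symbol d J ξ := by
  obtain ⟨B, hB, hmoment⟩ := exists_secondMoment_le_sum hJ hlower
  refine ⟨(1 + B) * (π ^ 2 / 2 / J 1 + π ^ 2 / 4), by positivity, fun ξ n hs hξ hn => ?_⟩
  have hfirst := sum_sq_mul_le_symbol hJ hs hξ
  rw [← le_div_iff₀ hJ1, mul_div_right_comm] at hfirst
  have hpartial := sum_sq_mul_sum_le_symbol hJ hs hn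
  have hsum : 0 ≤ ∑ k ∈ range (n + 1), J k * (k : ℝ) ^ (d + 1) :=
    sum_nonneg fun k _ => mul_nonneg (hJ k) (by positivity)
  calc (∑ i, ξ i ^ 2) * (1 + secondMoment a n)
      ≤ (∑ i, ξ i ^ 2) * ((1 + B) * (1 + ∑ k ∈ range (n + 1), J k * (k : ℝ) ^ (d + 1))) := by
        gcongr
        linarith [hmoment n]
    _ ≤ (1 + B) * (π ^ 2 / 2 / J 1 * symbol d J ξ + π ^ 2 / 4 * symbol d J ξ) := by
        rw [mul_left_comm, mul_one_add]
        gcongr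
    _ = _ := by ring

lemma natCast_mul_floor_sq_le {x y : ℝ} (hx : 0 ≤ x) (hy : 0 ≤ y) (d : ℕ) :
    d * (⌊y / (d + 1) / x⌋₊ : ℝ) ^ 2 * x ^ 2 ≤ y ^ 2 := by
  have hfloor : (⌊y / (d + 1) / x⌋₊ : ℝ) * x ≤ y / (d + 1) := by
    refine (mul_le_mul_of_nonneg_right (Nat.floor_le (by positivity)) hx).trans ?_
    rw [div_mul_comm]
    exact mul_le_of_le_one_left (by positivity) (div_self_le_one x)
  calc d * (⌊y / (d + 1) / x⌋₊ : ℝ) ^ 2 * x ^ 2 = d * (⌊y / (d + 1) / x⌋₊ * x) ^ 2 := by ring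
    _ ≤ ((d : ℝ) + 1) ^ 2 * (y / (d + 1)) ^ 2 := by gcongr; nlinarith [d.cast_nonneg (α := ℝ)]
    _ = y ^ 2 := by field_simp

lemma sqrt_sum_sq_le {ξ : Fin d → ℝ} (hξ : ∀ i, |ξ i| ≤ π) :
    √(∑ i, ξ i ^ 2) ≤ √(d * π ^ 2) := by
  refine sqrt_le_sqrt ?_
  simpa using sum_le_card_nsmul univ (fun i => ξ i ^ 2) (π ^ 2) fun i _ =>
    sq_le_sq.mpr ((hξ i).trans (le_abs_self π))

lemma exists_deltaFun_le_symbol (hJ : ∀ k, 0 ≤ J k) (hJ1 : 0 < J 1) (ha : 0 < a)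
    (hlower : a ≤ 2 → (fun k : ℕ => (k : ℝ) ^ (-((d : ℝ) + a))) =O[atTop] J) :
    ∃ c, 0 < c ∧ ∀ ξ : Fin d → ℝ, (Summable fun k => J k * shellSinSq ξ k) →
      (∀ i, |ξ i| ≤ π) → c * deltaFun (ENNReal.ofReal a) √(∑ i, ξ i ^ 2) ≤ symbol d J ξ := by
  rcases le_or_gt a 2 with ha2 | ha2
  · obtain ⟨C, hC, hsymbol⟩ := exists_sq_mul_secondMoment_le_symbol hJ hJ1 (hlower ha2)
    obtain ⟨c, hc, hdelta⟩ := exists_deltaFun_le_secondMoment ha ha2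
      (by positivity : 0 < π / (d + 1)) √(d * π ^ 2)
    refine ⟨c / C, by positivity, fun ξ hs hξ => ?_⟩
    set r := √(∑ i, ξ i ^ 2) with hr
    have hfloor := natCast_mul_floor_sq_le (sqrt_nonneg (∑ i, ξ i ^ 2)) pi_nonneg d
    rw [sq_sqrt_sum_sq] at hfloor
    rw [div_mul_eq_mul_div, div_le_iff₀' hC]
    calc c * deltaFun (ENNReal.ofReal a) r ≤ r ^ 2 * (1 + secondMoment a ⌊π / (d + 1) / r⌋₊) :=
          hdelta r (sqrt_nonneg _) (sqrt_sum_sq_le hξ)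
      _ ≤ C * symbol d J ξ := by
          rw [hr, sq_sqrt_sum_sq]
          exact hsymbol ξ _ hs hξ hfloor
  · refine ⟨J 1 / (π ^ 2 / 2), by positivity, fun ξ hs hξ => ?_⟩
    rw [deltaFun_of_two_lt (ENNReal.ofNat_lt_ofReal.mpr ha2), sq_sqrt_sum_sq, div_mul_eq_mul_div,
      div_le_iff₀' (by positivity), mul_comm (J 1)]
    exact sum_sq_mul_le_symbol hJ hs hξ

lemma rpow_mul_eq_div_rpow_neg {x : ℝ} (hx : 0 ≤ x) (s y : ℝ) : x ^ s * y = y / x ^ (-s) := by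
  rw [rpow_neg hx, div_inv_eq_mul, mul_comm]

lemma isBigO_rpow_neg_of_tendsto {s A : ℝ}
    (h : Tendsto (fun k : ℕ => (k : ℝ) ^ s * J k) atTop (𝓝 A)) :
    J =O[atTop] fun k => (k : ℝ) ^ (-s) := by
  refine isBigO_of_div_tendsto_nhds ?_ A
    (h.congr fun k => rpow_mul_eq_div_rpow_neg k.cast_nonneg s (J k))
  filter_upwards [eventually_gt_atTop 0] with k hk h0
  exact absurd h0 (rpow_pos_of_pos (Nat.cast_pos.mpr hk) _).ne'

lemma rpow_neg_isTheta_of_tendsto {s A : ℝ} (hA : A ≠ 0)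
    (h : Tendsto (fun k : ℕ => (k : ℝ) ^ s * J k) atTop (𝓝 A)) :
    (fun k : ℕ => (k : ℝ) ^ (-s)) =Θ[atTop] J :=
  isTheta_of_div_tendsto_nhds_ne_zero
    (h.congr fun k => rpow_mul_eq_div_rpow_neg k.cast_nonneg s (J k)) hA

-- Any exponent above `2` serves for order `∞`, as `δ` is the same for all orders in `(2, ∞]`.
lemma JOrder.exists_isBigO {α : ℝ≥0∞} (h : JOrder d J α) (hα : 0 < α) :
    ∃ a : ℝ, 0 < a ∧ deltaFun α = deltaFun (ENNReal.ofReal a) ∧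
      (J =O[atTop] fun k => (k : ℝ) ^ (-((d : ℝ) + a))) ∧
      (a ≤ 2 → (fun k : ℕ => (k : ℝ) ^ (-((d : ℝ) + a))) =O[atTop] J) := by
  rcases eq_or_ne α ⊤ with rfl | hα_top
  · rw [JOrder, if_pos rfl] at h
    refine ⟨3, by norm_num, funext fun r => ?_, isBigO_rpow_neg_of_tendsto (h 3 (by norm_num)),
      fun h3 => absurd h3 (by norm_num)⟩
    rw [deltaFun_of_two_lt ENNReal.ofNat_lt_top,
      deltaFun_of_two_lt (ENNReal.ofNat_lt_ofReal.mpr (by norm_num))]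
  · rw [JOrder, if_neg hα_top] at h
    obtain ⟨A, hA, hlim⟩ := h
    exact ⟨α.toReal, ENNReal.toReal_pos hα.ne' hα_top, by rw [ENNReal.ofReal_toReal hα_top],
      isBigO_rpow_neg_of_tendsto hlim, fun _ => (rpow_neg_isTheta_of_tendsto hA.ne' hlim).isBigO⟩

theorem stmt5_general (hJ : ∀ k, 0 ≤ J k) (hJ1 : 0 < J 1) (ha : 0 < a)
    (hupper : J =O[atTop] fun k => (k : ℝ) ^ (-((d : ℝ) + a)))
    (hlower : a ≤ 2 → (fun k : ℕ => (k : ℝ) ^ (-((d : ℝ) + a))) =O[atTop] J) :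
    ∃ c C : ℝ, 0 < c ∧ 0 < C ∧ ∀ ξ : Fin d → ℝ, (∀ i, |ξ i| ≤ π) →
      c * deltaFun (ENNReal.ofReal a) √(∑ i, ξ i ^ 2) ≤ symbol d J ξ ∧
        symbol d J ξ ≤ C * deltaFun (ENNReal.ofReal a) √(∑ i, ξ i ^ 2) := by
  obtain ⟨c, hc, hlow⟩ := exists_deltaFun_le_symbol hJ hJ1 ha hlower
  obtain ⟨C₁, hC₁, hup⟩ := exists_symbol_le_modelSymbol hJ ha hupper
  obtain ⟨C₂, hC₂, hmodel⟩ := exists_modelSymbol_le_deltaFun ha √(d * π ^ 2)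
  refine ⟨c, C₁ * C₂, hc, mul_pos hC₁ hC₂, fun ξ hξ => ?_⟩
  obtain ⟨hs, hsymbol⟩ := hup ξ
  refine ⟨hlow ξ hs hξ, hsymbol.trans ?_⟩
  rw [mul_assoc]
  exact mul_le_mul_of_nonneg_left (hmodel _ (sqrt_nonneg _) (sqrt_sum_sq_le hξ)) hC₁.le

end SymbolBounds

theorem stmt5 (d : ℕ) (hd : 1 ≤ d) (J : ℕ → ℝ)
    (hJpos : ∀ k, 0 ≤ J k) (hJbar : Summable (JbarSummand d J)) (hJ1 : 0 < J 1)
    (α : ℝ≥0∞) (hα : 0 < α) (horder : JOrder d J α) :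
    ∃ c C : ℝ, 0 < c ∧ 0 < C ∧ ∀ ξ : Fin d → ℝ, (∀ i, |ξ i| ≤ Real.pi) →
      c * deltaFun α (Real.sqrt (∑ i, ξ i ^ 2)) ≤ symbol d J ξ ∧
      symbol d J ξ ≤ C * deltaFun α (Real.sqrt (∑ i, ξ i ^ 2)) := by
  obtain ⟨a, ha, hδ, hupper, hlower⟩ := horder.exists_isBigO hα
  exact hδ ▸ stmt5_general hJpos hJ1 ha hupper hlower
end
end
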